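/- Let n ≥ 3 be an integer and let φ be a C² function on the closed upper half-space {(z,t) : z ∈ ℝ^{n-1}, t ≥ 0} such that ∫_{ℝ^n_+} (φ² + |∇φ|²) < ∞, Δφ = 0 on the open half-space ℝ^n_+, and ∂φ/∂t(z,0) + n · U(z,0)^{2/(n-2)} · φ(z,0) = 0 for every z ∈ ℝ^{n-1}. Then there exist real numbers c_1, …, c_n such that φ = Σ_{b=1}^{n} c_b · j_b on ℝ^n_+. -/

import Mathlib

open MeasureTheory

noncomputable section

/-- Points of the upper half-space: a pair `(z, t)` with `z ∈ ℝ^{n-1}`, `t ∈ ℝ`. -/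
abbrev Pt (n : ℕ) := EuclideanSpace ℝ (Fin (n - 1)) × ℝ

/-- The standard bubble `U(z,t) = ((1+t)^2 + |z|^2)^{-(n-2)/2}`. -/
def stdBubble (n : ℕ) (p : Pt n) : ℝ :=
  ((1 + p.2) ^ 2 + ‖p.1‖ ^ 2) ^ (-(((n : ℝ) - 2) / 2))

/-- Directional (partial) derivative of `f` at `x` in the direction `v`. -/
def pd {E : Type*} [NormedAddCommGroup E] [NormedSpace ℝ E]
    (v : E) (f : E → ℝ) (x : E) : ℝ :=
  fderiv ℝ f x v

/-- The `i`-th horizontal coordinate direction. -/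
def ez (n : ℕ) (i : Fin (n - 1)) : Pt n := (EuclideanSpace.single i 1, 0)

/-- The vertical (`t`) coordinate direction. -/
def et (n : ℕ) : Pt n := (0, 1)

/-- The Euclidean Laplacian `Δf = Σ_i ∂²f/∂z_i² + ∂²f/∂t²`. -/
def lap (n : ℕ) (f : Pt n → ℝ) (p : Pt n) : ℝ :=
  (∑ i : Fin (n - 1), pd (ez n i) (pd (ez n i) f) p) + pd (et n) (pd (et n) f) p

/-- `j_n = ((n-2)/2) U + Σ_{a=1}^n y_a ∂U/∂y_a`, where `y = (z,t)`. -/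
def jlast (n : ℕ) (p : Pt n) : ℝ :=
  (((n : ℝ) - 2) / 2) * stdBubble n p +
    ((∑ i : Fin (n - 1), p.1 i * pd (ez n i) (stdBubble n) p) +
      p.2 * pd (et n) (stdBubble n) p)

/-- The open upper half-space. -/
def upperHalf (n : ℕ) : Set (Pt n) := {p | 0 < p.2}

open scoped ContDiff

def HH (n : ℕ) : Set (Pt n) := {p : Pt n | 0 ≤ p.2}

def ee (n : ℕ) : Option (Fin (n - 1)) → Pt n
  | none => et n
  | some i => ez n i

def co (n : ℕ) : Option (Fin (n - 1)) → (Pt n →L[ℝ] ℝ)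
  | none => ContinuousLinearMap.snd ℝ _ ℝ
  | some i => (EuclideanSpace.proj i).comp (ContinuousLinearMap.fst ℝ _ ℝ)

theorem co_none (n : ℕ) (p : Pt n) : co n none p = p.2 := rfl
theorem co_some (n : ℕ) (i : Fin (n - 1)) (p : Pt n) : co n (some i) p = p.1 i := rfl

theorem co_ee (n : ℕ) (a b : Option (Fin (n - 1))) : co n a (ee n b) = if a = b then 1 else 0 := by
  rcases a with _ | i <;> rcases b with _ | j <;>
    simp [co_none, co_some, ee, et, ez, Pi.single_apply]

theorem sum_co (n : ℕ) (p : Pt n) : p = ∑ a, co n a p • ee n a := by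
  rw [Fintype.sum_option]
  ext i
  · simp [co_none, co_some, ee, et, ez, Prod.fst_sum, Finset.sum_apply, Pi.single_apply]
  · simp [co_none, co_some, ee, et, ez, Prod.snd_sum]

theorem lap_eq (n : ℕ) (f : Pt n → ℝ) (p : Pt n) :
    lap n f p = ∑ a, pd (ee n a) (pd (ee n a) f) p := by
  rw [Fintype.sum_option, lap, add_comm]; rfl

theorem clm_eq_sum (n : ℕ) (A : Pt n →L[ℝ] ℝ) (v : Pt n) :
    A v = ∑ a, co n a v * A (ee n a) := by
  conv_lhs => rw [sum_co n v]
  simp [map_sum]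

section smooth
variable {E : Type*} [NormedAddCommGroup E] [NormedSpace ℝ E]

theorem pd_smooth {f : E → ℝ} (hf : ContDiff ℝ ∞ f) (v : E) : ContDiff ℝ ∞ (pd v f) := by
  unfold pd
  exact (hf.fderiv_right (by simp)).clm_apply contDiff_const

theorem sm_diff {f : E → ℝ} (hf : ContDiff ℝ ∞ f) : Differentiable ℝ f :=
  hf.differentiable (by simp)

theorem pd_mul {f g : E → ℝ} (hf : Differentiable ℝ f) (hg : Differentiable ℝ g) (v : E) :
    pd v (fun y => f y * g y) = fun y => f y * pd v g y + pd v f y * g y := by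
  funext y
  unfold pd
  rw [fderiv_fun_mul (hf y) (hg y)]
  simp [mul_comm]

theorem pd_add {f g : E → ℝ} (hf : Differentiable ℝ f) (hg : Differentiable ℝ g) (v : E) :
    pd v (fun y => f y + g y) = fun y => pd v f y + pd v g y := by
  funext y
  unfold pd
  rw [fderiv_fun_add (hf y) (hg y)]
  simp

theorem pd_sum {ι : Type*} (s : Finset ι) {f : ι → E → ℝ} (hf : ∀ i, Differentiable ℝ (f i)) (v : E) :
    pd v (fun y => ∑ i ∈ s, f i y) = fun y => ∑ i ∈ s, pd v (f i) y := by
  funext y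
  unfold pd
  rw [fderiv_fun_sum (fun i _ => hf i y)]
  simp

theorem pd_comm {f : E → ℝ} (hf : ContDiff ℝ ∞ f) (v w : E) : pd v (pd w f) = pd w (pd v f) := by
  funext y
  have h2 : Differentiable ℝ (fderiv ℝ f) := (hf.fderiv_right (m := ∞) (by simp)).differentiable (by simp)
  have key : ∀ v w : E, pd v (pd w f) y = fderiv ℝ (fderiv ℝ f) y v w := by
    intro v w
    unfold pd
    rw [fderiv_clm_apply (h2 y) (by fun_prop)]
    simp
  rw [key, key]
  have hs : IsSymmSndFDerivAt ℝ f y := hf.contDiffAt.isSymmSndFDerivAt (by simp; exact WithTop.coe_le_coe.2 le_top)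
  exact hs v w

def eul (f : E → ℝ) (y : E) : ℝ := fderiv ℝ f y y

theorem eul_smooth {f : E → ℝ} (hf : ContDiff ℝ ∞ f) : ContDiff ℝ ∞ (eul f) := by
  unfold eul
  exact (hf.fderiv_right (by simp)).clm_apply contDiff_id

theorem pd_eul {f : E → ℝ} (hf : ContDiff ℝ ∞ f) (v : E) :
    pd v (eul f) = fun y => eul (pd v f) y + pd v f y := by
  funext y
  have h2 : Differentiable ℝ (fderiv ℝ f) := (hf.fderiv_right (m := ∞) (by simp)).differentiable (by simp)
  have h1 : pd v (eul f) y = fderiv ℝ (fderiv ℝ f) y v y + fderiv ℝ f y v := by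
    unfold pd eul
    rw [fderiv_clm_apply (h2 y) (by fun_prop)]
    simp [add_comm]
  have h3 : eul (pd v f) y = fderiv ℝ (fderiv ℝ f) y y v := by
    unfold pd eul
    rw [fderiv_clm_apply (h2 y) (by fun_prop)]
    simp
  have hs : IsSymmSndFDerivAt ℝ f y := hf.contDiffAt.isSymmSndFDerivAt (by simp; exact WithTop.coe_le_coe.2 le_top)
  rw [h1, h3, hs v y]; rfl

theorem eul_sum {ι : Type*} (s : Finset ι) {f : ι → E → ℝ} (hf : ∀ i, Differentiable ℝ (f i)) (y : E) :
    eul (fun y => ∑ i ∈ s, f i y) y = ∑ i ∈ s, eul (f i) y := by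
  unfold eul
  rw [fderiv_fun_sum (fun i _ => hf i y)]
  simp

theorem pd_clm (A : E →L[ℝ] ℝ) (v : E) : pd v (fun y => A y) = fun _ => A v := by
  funext y; unfold pd; simp

theorem pd_const (c : ℝ) (v : E) : pd v (fun _ : E => c) = fun _ => 0 := by
  funext y; unfold pd; simp

end smooth

theorem lap_fun (n : ℕ) (f : Pt n → ℝ) : lap n f = fun p => ∑ a, pd (ee n a) (pd (ee n a) f) p :=
  funext (lap_eq n f)

theorem lap_smooth {n : ℕ} {f : Pt n → ℝ} (hf : ContDiff ℝ ∞ f) : ContDiff ℝ ∞ (lap n f) := by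
  rw [lap_fun]
  exact ContDiff.sum fun a _ => pd_smooth (pd_smooth hf _) _

theorem lap_add {n : ℕ} {f g : Pt n → ℝ} (hf : ContDiff ℝ ∞ f) (hg : ContDiff ℝ ∞ g) (p : Pt n) :
    lap n (fun y => f y + g y) p = lap n f p + lap n g p := by
  simp only [lap_eq]
  rw [← Finset.sum_add_distrib]
  refine Finset.sum_congr rfl fun a _ => ?_
  rw [pd_add (sm_diff hf) (sm_diff hg), pd_add (sm_diff (pd_smooth hf _)) (sm_diff (pd_smooth hg _))]

theorem lap_mul {n : ℕ} {f g : Pt n → ℝ} (hf : ContDiff ℝ ∞ f) (hg : ContDiff ℝ ∞ g) (p : Pt n) :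
    lap n (fun y => f y * g y) p = f p * lap n g p + g p * lap n f p
      + 2 * ∑ a, pd (ee n a) f p * pd (ee n a) g p := by
  simp only [lap_eq]
  rw [Finset.mul_sum, Finset.mul_sum, Finset.mul_sum, ← Finset.sum_add_distrib, ← Finset.sum_add_distrib]
  refine Finset.sum_congr rfl fun a _ => ?_
  have h1 := sm_diff hf
  have h2 := sm_diff hg
  have h3 := sm_diff (pd_smooth hf (ee n a))
  have h4 := sm_diff (pd_smooth hg (ee n a))
  rw [pd_mul h1 h2, pd_add (by fun_prop) (by fun_prop), pd_mul h1 h4, pd_mul h3 h2]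
  ring

theorem lap_pd {n : ℕ} {f : Pt n → ℝ} (hf : ContDiff ℝ ∞ f) (v : Pt n) :
    lap n (pd v f) = pd v (lap n f) := by
  rw [lap_fun, lap_fun, pd_sum _ (fun a => sm_diff (pd_smooth (pd_smooth hf _) _))]
  funext p
  refine Finset.sum_congr rfl fun a _ => ?_
  rw [pd_comm hf _ v, pd_comm (pd_smooth hf _) _ v]

theorem lap_eul {n : ℕ} {f : Pt n → ℝ} (hf : ContDiff ℝ ∞ f) (p : Pt n) :
    lap n (eul f) p = eul (lap n f) p + 2 * lap n f p := by
  rw [lap_fun n f, eul_sum _ (fun a => sm_diff (pd_smooth (pd_smooth hf _) _)), lap_eq, Finset.mul_sum,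
    ← Finset.sum_add_distrib]
  refine Finset.sum_congr rfl fun a _ => ?_
  have h1 := pd_smooth hf (ee n a)
  rw [pd_eul hf, pd_add (sm_diff (eul_smooth h1)) (sm_diff h1), pd_eul h1]
  ring

theorem lap_clm {n : ℕ} (A : Pt n →L[ℝ] ℝ) (p : Pt n) : lap n (fun y => A y) p = 0 := by
  rw [lap_eq]
  refine Finset.sum_eq_zero fun a _ => ?_
  rw [pd_clm, pd_const]

theorem lap_const {n : ℕ} (c : ℝ) (p : Pt n) : lap n (fun _ => c) p = 0 := by
  rw [lap_eq]
  refine Finset.sum_eq_zero fun a _ => ?_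
  rw [pd_const, pd_const]

/-- squared Euclidean norm -/
def NN (n : ℕ) (p : Pt n) : ℝ := ‖p.1‖ ^ 2 + p.2 ^ 2

theorem NN_eq (n : ℕ) (p : Pt n) : NN n p = ∑ a, co n a p * co n a p := by
  rw [Fintype.sum_option, NN, EuclideanSpace.norm_sq_eq]
  simp [co_none, co_some, sq, add_comm]

theorem NN_smooth (n : ℕ) : ContDiff ℝ ∞ (NN n) := by
  have : NN n = fun p => ∑ a, co n a p * co n a p := funext (NN_eq n)
  rw [this]
  exact ContDiff.sum fun a _ => (co n a).contDiff.mul (co n a).contDiff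

theorem pd_NN (n : ℕ) (v : Pt n) : pd v (NN n) = fun p => ∑ a, 2 * (co n a v) * co n a p := by
  have : NN n = fun p => ∑ a, co n a p * co n a p := funext (NN_eq n)
  rw [this, pd_sum Finset.univ (f := fun a p => co n a p * co n a p) (fun a => by fun_prop)]
  funext p
  refine Finset.sum_congr rfl fun a _ => ?_
  rw [pd_mul (co n a).differentiable (co n a).differentiable, pd_clm]
  ring

theorem pd_NN_ee (n : ℕ) (a : Option (Fin (n - 1))) : pd (ee n a) (NN n) = fun p => 2 * co n a p := by
  rw [pd_NN]
  funext p
  simp [co_ee]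

theorem card_opt {n : ℕ} (hn : 3 ≤ n) : (Fintype.card (Option (Fin (n - 1))) : ℝ) = n := by
  have h : n - 1 + 1 = n := by omega
  rw [Fintype.card_option, Fintype.card_fin, h]

theorem lap_NN {n : ℕ} (hn : 3 ≤ n) (p : Pt n) : lap n (NN n) p = 2 * n := by
  rw [lap_eq, ← card_opt hn]
  have : ∀ a, pd (ee n a) (pd (ee n a) (NN n)) p = 2 := by
    intro a
    rw [pd_NN_ee, pd_mul (by fun_prop) (co n a).differentiable, pd_clm, pd_const]
    simp [co_ee]
  simp [this]; ring

theorem eul_eq (n : ℕ) (f : Pt n → ℝ) (p : Pt n) : eul f p = ∑ a, co n a p * pd (ee n a) f p :=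
  clm_eq_sum n _ _

/-- the conformal field -/
def XX (n : ℕ) (p : Pt n) : Pt n := ((2 * p.2) • p.1, p.2 ^ 2 - ‖p.1‖ ^ 2 - 1)

theorem XX_eq (n : ℕ) (p : Pt n) : XX n p = (2 * p.2) • p - (NN n p + 1) • et n := by
  ext i
  · simp [XX, et]
  · simp [XX, et, NN]; ring

/-- the adjoint test function -/
def xi (n : ℕ) (η : Pt n → ℝ) (p : Pt n) : ℝ :=
  (2 * p.2 * eul η p + (-(NN n p + 1)) * pd (et n) η p) + ((n - 2) * p.2 + n) * η p

theorem snd_smooth (n : ℕ) : ContDiff ℝ ∞ (fun p : Pt n => p.2) := contDiff_snd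

theorem xi_smooth {n : ℕ} {η : Pt n → ℝ} (h : ContDiff ℝ ∞ η) : ContDiff ℝ ∞ (xi n η) := by
  have h1 := eul_smooth h
  have h2 := pd_smooth h (et n)
  have h3 := NN_smooth n
  unfold xi
  fun_prop

theorem lap_xi {n : ℕ} (hn : 3 ≤ n) {η : Pt n → ℝ} (h : ContDiff ℝ ∞ η) (p : Pt n) :
    lap n (xi n η) p = fderiv ℝ (lap n η) p (XX n p) + ((n + 2) * p.2 + n) * lap n η p := by
  have h1 := eul_smooth h
  have h2 := pd_smooth h (et n)
  have h3 := NN_smooth n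
  have hc : ContDiff ℝ ∞ (fun p : Pt n => 2 * p.2) := by fun_prop
  have hd : ContDiff ℝ ∞ (fun p : Pt n => -(NN n p + 1)) := by fun_prop
  have hf : ContDiff ℝ ∞ (fun p : Pt n => ((n : ℝ) - 2) * p.2 + n) := by fun_prop
  have e1 : ∀ c d : ℝ, ∀ v : Pt n, pd v (fun p : Pt n => c * p.2 + d) = fun _ => c * v.2 := by
    intro c d v
    rw [pd_add (by fun_prop) (by fun_prop), pd_mul (by fun_prop) (by fun_prop), pd_const, pd_const]
    have := pd_clm (co n none) v
    simp only [co_none] at this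
    rw [this]; simp
  have e2 : ∀ c d : ℝ, lap n (fun p : Pt n => c * p.2 + d) p = 0 := by
    intro c d
    rw [lap_eq]
    refine Finset.sum_eq_zero fun a _ => ?_
    rw [e1, pd_const]
  have e1' : ∀ v : Pt n, pd v (fun p : Pt n => 2 * p.2) = fun _ => 2 * v.2 := by
    intro v; simpa using e1 2 0 v
  have e2' : lap n (fun p : Pt n => 2 * p.2) p = 0 := by simpa using e2 2 0
  have e3 : ∀ v : Pt n, pd v (fun p : Pt n => -(NN n p + 1)) = fun p => - pd v (NN n) p := by
    intro v; funext p; unfold pd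
    simp
  have e4 : lap n (fun p : Pt n => -(NN n p + 1)) p = - (2 * n) := by
    rw [← lap_NN hn p, lap_eq, lap_eq, ← Finset.sum_neg_distrib]
    refine Finset.sum_congr rfl fun a _ => ?_
    rw [e3]; unfold pd; simp
  have hsum : ∀ f : Pt n → ℝ, ∑ a, (ee n a).2 * pd (ee n a) f p = pd (et n) f p := by
    intro f
    rw [Fintype.sum_option]; simp [ee, ez, et]
  unfold xi
  rw [lap_add (by fun_prop) (by fun_prop), lap_add (by fun_prop) (by fun_prop), lap_mul hc h1, lap_mul hd h2,
    lap_mul hf h, e2', e4, e2, lap_eul h, lap_pd h]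
  simp only [e1, e1', e3, pd_NN_ee]
  have s1 : ∑ a, 2 * (ee n a).2 * pd (ee n a) (eul η) p = 2 * (eul (pd (et n) η) p + pd (et n) η p) := by
    have h5 := hsum (eul η)
    have h6 := congrFun (pd_eul h (et n)) p
    rw [← h6, ← h5, Finset.mul_sum]
    exact Finset.sum_congr rfl fun _ _ => by ring
  have s2 : ∑ a, -(2 * co n a p) * pd (ee n a) (pd (et n) η) p = -2 * eul (pd (et n) η) p := by
    rw [eul_eq, Finset.mul_sum]
    exact Finset.sum_congr rfl fun _ _ => by ring
  have s3 : ∑ a, ((n : ℝ) - 2) * (ee n a).2 * pd (ee n a) η p = (n - 2) * pd (et n) η p := by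
    rw [← hsum η, Finset.mul_sum]
    exact Finset.sum_congr rfl fun _ _ => by ring
  have s4 : fderiv ℝ (lap n η) p (XX n p) = 2 * p.2 * eul (lap n η) p - (NN n p + 1) * pd (et n) (lap n η) p := by
    rw [XX_eq, map_sub, map_smul, map_smul]; rfl
  rw [s1, s2, s3, s4]
  ring
theorem upper_open (n : ℕ) : IsOpen (upperHalf n) := isOpen_lt continuous_const continuous_snd

theorem HH_closed (n : ℕ) : IsClosed (HH n) := isClosed_le continuous_const continuous_snd

theorem upper_sub (n : ℕ) : upperHalf n ⊆ HH n := fun p (hp : 0 < p.2) => show 0 ≤ p.2 from hp.le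

theorem HH_nhds {n : ℕ} {p : Pt n} (hp : p ∈ upperHalf n) : HH n ∈ nhds p :=
  Filter.mem_of_superset ((upper_open n).mem_nhds hp) (upper_sub n)

theorem HH_udiff (n : ℕ) : UniqueDiffOn ℝ (HH n) := by
  refine uniqueDiffOn_convex ?_ ?_
  · exact convex_halfSpace_ge (𝕜 := ℝ) (f := fun p : Pt n => p.2) ⟨fun _ _ => rfl, fun _ _ => rfl⟩ 0
  · exact ⟨et n, (upper_open n).subset_interior_iff.2 (upper_sub n) (by simp [upperHalf, et])⟩

theorem upper_prod (n : ℕ) : upperHalf n = Set.univ ×ˢ Set.Ioi (0:ℝ) := by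
  ext p; simp [upperHalf]

theorem integ_cs {n : ℕ} {q : Pt n → ℝ} (hq : ContinuousOn q (HH n)) {K : Set (Pt n)} (hK : IsCompact K)
    (h0 : ∀ p, p ∉ K → q p = 0) : IntegrableOn q (upperHalf n) := by
  have h1 : IntegrableOn q (K ∩ HH n) :=
    (hq.mono Set.inter_subset_right).integrableOn_compact (hK.inter_right (HH_closed n))
  have h2 : IntegrableOn q (HH n) := by
    refine h1.of_forall_sdiff_eq_zero (HH_closed n).measurableSet ?_
    intro p hp
    exact h0 p fun hpK => hp.2 ⟨hpK, hp.1⟩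
  exact h2.mono_set (upper_sub n)

theorem pd_within {n : ℕ} (q : Pt n → ℝ) {p : Pt n} (hp : p ∈ upperHalf n) (v : Pt n) :
    pd v q p = fderivWithin ℝ q (HH n) p v := by
  unfold pd; rw [fderivWithin_of_mem_nhds (HH_nhds hp)]

theorem integ_pd {n : ℕ} {q : Pt n → ℝ} (hq : ContDiffOn ℝ 1 q (HH n)) (hc : HasCompactSupport q) (v : Pt n) :
    IntegrableOn (pd v q) (upperHalf n) := by
  have h1 : ContinuousOn (fun p => fderivWithin ℝ q (HH n) p v) (HH n) :=
    (hq.continuousOn_fderivWithin (HH_udiff n) le_rfl).clm_apply continuousOn_const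
  have h2 : IntegrableOn (fun p => fderivWithin ℝ q (HH n) p v) (upperHalf n) := by
    refine integ_cs h1 hc ?_
    intro p hp
    have : q =ᶠ[nhds p] fun _ => 0 := notMem_tsupport_iff_eventuallyEq.1 hp
    rw [(this.filter_mono nhdsWithin_le_nhds).fderivWithin_eq this.eq_of_nhds]
    simp
  exact h2.congr_fun (fun p hp => (pd_within q hp v).symm) (upper_open n).measurableSet

theorem diffAt_of {n : ℕ} {q : Pt n → ℝ} (hq : ContDiffOn ℝ 1 q (HH n)) {p : Pt n} (hp : p ∈ upperHalf n) :
    DifferentiableAt ℝ q p :=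
  ((hq.contDiffAt (HH_nhds hp)).differentiableAt (by simp))

theorem int_T {n : ℕ} {q : Pt n → ℝ} (hq : ContDiffOn ℝ 1 q (HH n)) (hc : HasCompactSupport q)
    (h0 : ∀ z, q (z, 0) = 0) : ∫ p in upperHalf n, pd (et n) q p = 0 := by
  have hi := integ_pd hq hc (et n)
  rw [upper_prod] at hi ⊢
  have hi2 := hi
  rw [Measure.volume_eq_prod] at hi hi2 ⊢
  rw [setIntegral_prod _ hi]
  rw [IntegrableOn, ← Measure.prod_restrict] at hi2
  have h3 := hi2.prod_right_ae
  rw [Measure.restrict_univ] at h3 ⊢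
  refine integral_eq_zero_of_ae ?_
  filter_upwards [h3] with z hz
  have hcont : ContinuousWithinAt (fun t : ℝ => q (z, t)) (Set.Ici 0) 0 := by
    have h4 : ContinuousWithinAt q (HH n) (z, 0) := hq.continuousOn (z, 0) (by simp [HH])
    refine ContinuousWithinAt.comp (t := HH n) h4 (by fun_prop) ?_
    intro t ht; exact ht
  have hder : ∀ t ∈ Set.Ioi (0:ℝ), HasDerivAt (fun t : ℝ => q (z, t)) (pd (et n) q (z, t)) t := by
    intro t ht
    have h5 : HasFDerivAt q (fderiv ℝ q (z, t)) (z, t) := (diffAt_of hq (p := (z, t)) ht).hasFDerivAt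
    have h6 : HasDerivAt (fun t : ℝ => (z, t)) (0, 1) t := (hasDerivAt_const t z).prodMk (hasDerivAt_id t)
    exact h5.comp_hasDerivAt t h6
  have htend : Filter.Tendsto (fun t : ℝ => q (z, t)) Filter.atTop (nhds 0) := by
    obtain ⟨R, hR⟩ := hc.isBounded.subset_closedBall (0 : Pt n)
    refine tendsto_const_nhds.congr' ?_
    filter_upwards [Filter.eventually_gt_atTop (max R 0)] with t ht
    symm
    apply image_eq_zero_of_notMem_tsupport
    intro hm
    have := hR hm
    rw [mem_closedBall_zero_iff] at this
    have h7 : ‖t‖ ≤ R := (le_max_right _ _).trans this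
    rw [Real.norm_eq_abs] at h7
    have := le_abs_self t
    have := le_max_left R 0
    linarith
  have := integral_Ioi_of_hasDerivAt_of_tendsto hcont hder hz htend
  rw [this, h0]; simp

theorem int_Z {n : ℕ} {q : Pt n → ℝ} (hq : ContDiffOn ℝ 1 q (HH n)) (hc : HasCompactSupport q)
    (i : Fin (n - 1)) : ∫ p in upperHalf n, pd (ez n i) q p = 0 := by
  have hi := integ_pd hq hc (ez n i)
  rw [upper_prod] at hi ⊢
  rw [Measure.volume_eq_prod] at hi ⊢
  rw [IntegrableOn, ← Measure.prod_restrict] at hi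
  rw [← Measure.prod_restrict, integral_prod_symm _ hi, Measure.restrict_univ]
  refine setIntegral_eq_zero_of_forall_eq_zero ?_
  intro t ht
  have hd : ∀ z, HasFDerivAt (fun z => q (z, t)) ((fderiv ℝ q (z, t)).comp (ContinuousLinearMap.inl ℝ _ ℝ)) z := by
    intro z
    have h5 : HasFDerivAt q (fderiv ℝ q (z, t)) (z, t) := (diffAt_of hq (p := (z, t)) ht).hasFDerivAt
    have h6 : HasFDerivAt (fun z : EuclideanSpace ℝ (Fin (n - 1)) => (z, t)) (ContinuousLinearMap.inl ℝ _ ℝ) z :=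
      hasFDerivAt_prodMk_left z t
    exact h5.comp z h6
  have hcs : HasCompactSupport (fun z => q (z, t)) := by
    refine HasCompactSupport.of_support_subset_isCompact (hc.image continuous_fst) ?_
    intro z hz
    exact ⟨(z, t), subset_tsupport _ hz, rfl⟩
  have hfd : ∀ z, fderiv ℝ (fun z => q (z, t)) z (EuclideanSpace.single i 1) = pd (ez n i) q (z, t) := by
    intro z
    rw [(hd z).fderiv]; simp [pd, ez]
  have hcont : Continuous (fun z => pd (ez n i) q (z, t)) := by
    have h1 : ContinuousOn (fun p => fderivWithin ℝ q (HH n) p (ez n i)) (HH n) :=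
      (hq.continuousOn_fderivWithin (HH_udiff n) le_rfl).clm_apply continuousOn_const
    have h2 : ContinuousOn (pd (ez n i) q) (upperHalf n) :=
      (h1.mono (upper_sub n)).congr fun p hp => pd_within q hp _
    exact h2.comp_continuous (by fun_prop) (fun z => ht)
  have := integral_smul_fderiv_eq_neg_fderiv_smul_of_integrable (𝕜 := ℝ) (μ := volume)
    (f := fun _ : EuclideanSpace ℝ (Fin (n - 1)) => (1:ℝ)) (g := fun z => q (z, t)) (v := EuclideanSpace.single i 1)
    (by simp) ?_ ?_ (by simp) (fun z _ => (hd z).differentiableAt)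
  · simp only [hfd] at this
    simpa using this
  · simp only [hfd, one_smul]
    refine hcont.integrable_of_hasCompactSupport ?_
    have h8 : (fun z => pd (ez n i) q (z, t)) = fun z => fderiv ℝ (fun z => q (z, t)) z (EuclideanSpace.single i 1) :=
      funext fun z => (hfd z).symm
    rw [h8]
    exact hcs.fderiv_apply ℝ _
  · simp only [one_smul]
    have : Continuous (fun z => q (z, t)) := continuous_iff_continuousAt.2 fun z => (hd z).continuousAt
    exact this.integrable_of_hasCompactSupport hcs
theorem ev_pd {n : ℕ} {f : Pt n → ℝ} {p : Pt n} (v : Pt n) (h : f =ᶠ[nhds p] fun _ => 0) :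
    pd v f =ᶠ[nhds p] fun _ => 0 := by
  filter_upwards [h.fderiv (𝕜 := ℝ)] with y hy
  unfold pd; rw [hy]; simp

theorem ev_lap {n : ℕ} {f : Pt n → ℝ} {p : Pt n} (h : f =ᶠ[nhds p] fun _ => 0) :
    lap n f =ᶠ[nhds p] fun _ => 0 := by
  have : ∀ᶠ y in nhds p, ∀ a, pd (ee n a) (pd (ee n a) f) y = 0 :=
    Filter.eventually_all.2 fun a => ev_pd _ (ev_pd _ h)
  filter_upwards [this] with y hy
  rw [lap_eq]; simp [hy]

theorem ev_xi {n : ℕ} {f : Pt n → ℝ} {p : Pt n} (h : f =ᶠ[nhds p] fun _ => 0) :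
    xi n f =ᶠ[nhds p] fun _ => 0 := by
  filter_upwards [h, h.fderiv (𝕜 := ℝ), ev_pd (et n) h] with y h1 h2 h3
  simp [xi, h1, h3, eul, h2]

theorem pd_mul_at {n : ℕ} {f g : Pt n → ℝ} {p : Pt n} (hf : DifferentiableAt ℝ f p)
    (hg : DifferentiableAt ℝ g p) (v : Pt n) :
    pd v (fun y => f y * g y) p = f p * pd v g p + pd v f p * g p := by
  unfold pd; rw [fderiv_fun_mul hf hg]; simp [mul_comm]

theorem pd_add_at {n : ℕ} {f g : Pt n → ℝ} {p : Pt n} (hf : DifferentiableAt ℝ f p)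
    (hg : DifferentiableAt ℝ g p) (v : Pt n) :
    pd v (fun y => f y + g y) p = pd v f p + pd v g p := by
  unfold pd; rw [fderiv_fun_add hf hg]; simp

theorem pd_sub_at {n : ℕ} {f g : Pt n → ℝ} {p : Pt n} (hf : DifferentiableAt ℝ f p)
    (hg : DifferentiableAt ℝ g p) (v : Pt n) :
    pd v (fun y => f y - g y) p = pd v f p - pd v g p := by
  unfold pd; rw [fderiv_fun_sub hf hg]; simp

def ww (n : ℕ) (φ : Pt n → ℝ) (p : Pt n) : ℝ :=
  fderivWithin ℝ φ (HH n) p (XX n p) + ((n - 2) * p.2 - n) * φ p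

def QQ (n : ℕ) (φ η : Pt n → ℝ) (a : Option (Fin (n - 1))) (p : Pt n) : ℝ :=
  co n a (XX n p) * (φ p * lap n η p) - φ p * pd (ee n a) (xi n η) p
    + xi n η p * fderivWithin ℝ φ (HH n) p (ee n a)

theorem XX_smooth (n : ℕ) : ContDiff ℝ ∞ (XX n) := by
  have : XX n = fun p => (2 * p.2) • p - (NN n p + 1) • et n := funext (XX_eq n)
  rw [this]
  have := NN_smooth n
  fun_prop

theorem coX_smooth (n : ℕ) (a : Option (Fin (n - 1))) : ContDiff ℝ ∞ (fun p => co n a (XX n p)) := by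
  have := XX_smooth n
  fun_prop

theorem pd_coX (n : ℕ) (a : Option (Fin (n - 1))) (p : Pt n) :
    pd (ee n a) (fun p => co n a (XX n p)) p = 2 * p.2 := by
  have h1 : (fun p => co n a (XX n p)) =
      fun p => (2 * p.2) * co n a p - (NN n p + 1) * co n a (et n) := by
    funext p; rw [XX_eq]; simp
  have hN : DifferentiableAt ℝ (NN n) p := (sm_diff (NN_smooth n)) p
  rw [h1, pd_sub_at (by fun_prop) (by fun_prop), pd_mul_at (by fun_prop) (by fun_prop),
    pd_mul_at (by fun_prop) (by fun_prop), pd_mul_at (by fun_prop) (by fun_prop),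
    pd_add_at (by fun_prop) (by fun_prop), pd_NN_ee, pd_clm, pd_const, pd_const, pd_const]
  have h2 := congrFun (pd_clm (co n none) (ee n a)) p
  simp only [co_none] at h2
  rw [h2]
  have h3 : (ee n a).2 = co n a (et n) := by
    have e1 := co_ee n none a
    have e2 := co_ee n a none
    rw [co_none] at e1
    rw [e1]; change _ = co n a (ee n none); rw [e2]; simp [eq_comm]
  rw [h3, co_ee]
  simp; ring

theorem QQ_contDiff {n : ℕ} {φ η : Pt n → ℝ} (hφ : ContDiffOn ℝ 2 φ (HH n)) (hη : ContDiff ℝ ∞ η)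
    (a : Option (Fin (n - 1))) : ContDiffOn ℝ 1 (QQ n φ η a) (HH n) := by
  have h1 : ContDiffOn ℝ 1 (fun p => fderivWithin ℝ φ (HH n) p (ee n a)) (HH n) :=
    (hφ.fderivWithin (HH_udiff n) (m := 1) (by norm_num)).clm_apply contDiffOn_const
  have h2 : ContDiffOn ℝ 1 φ (HH n) := hφ.of_le (by norm_num)
  have c : ∀ {f : Pt n → ℝ}, ContDiff ℝ ∞ f → ContDiffOn ℝ 1 f (HH n) := fun hf =>
    (hf.of_le (by exact_mod_cast le_top)).contDiffOn
  unfold QQ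
  exact (((c (coX_smooth n a)).mul (h2.mul (c (lap_smooth hη)))).sub
    (h2.mul (c (pd_smooth (xi_smooth hη) _)))).add ((c (xi_smooth hη)).mul h1)

theorem QQ_cs {n : ℕ} {φ η : Pt n → ℝ} (hc : HasCompactSupport η)
    (a : Option (Fin (n - 1))) : HasCompactSupport (QQ n φ η a) := by
  refine HasCompactSupport.intro hc ?_
  intro p hp
  have h := notMem_tsupport_iff_eventuallyEq.1 hp
  have h1 := (ev_lap h).eq_of_nhds
  have h2 := (ev_xi h).eq_of_nhds
  have h3 := (ev_pd (ee n a) (ev_xi h)).eq_of_nhds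
  simp [QQ, h1, h2, h3]

theorem QQ_div {n : ℕ} (hn : 3 ≤ n) {φ η : Pt n → ℝ} (hφ : ContDiffOn ℝ 2 φ (HH n)) (hη : ContDiff ℝ ∞ η)
    (hharm : ∀ p : Pt n, 0 < p.2 → lap n φ p = 0) {p : Pt n} (hp : p ∈ upperHalf n) :
    ∑ a, pd (ee n a) (QQ n φ η a) p = ww n φ p * lap n η p := by
  have hφp : ContDiffAt ℝ 2 φ p := hφ.contDiffAt (HH_nhds hp)
  have hd : DifferentiableAt ℝ φ p := hφp.differentiableAt (by norm_num)
  have hdd : ∀ a, DifferentiableAt ℝ (pd (ee n a) φ) p := by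
    intro a
    have : ContDiffAt ℝ 1 (fderiv ℝ φ) p := hφp.fderiv_right (by norm_num)
    exact (this.differentiableAt (by norm_num)).clm_apply (differentiableAt_const _)
  have hX : ∀ a, DifferentiableAt ℝ (fun p => co n a (XX n p)) p := fun a => sm_diff (coX_smooth n a) p
  have hl : DifferentiableAt ℝ (lap n η) p := sm_diff (lap_smooth hη) p
  have hxi : DifferentiableAt ℝ (xi n η) p := sm_diff (xi_smooth hη) p
  have hxid : ∀ a, DifferentiableAt ℝ (pd (ee n a) (xi n η)) p := fun a => sm_diff (pd_smooth (xi_smooth hη) _) p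
  have e : ∀ a, pd (ee n a) (QQ n φ η a) p =
      2 * p.2 * (φ p * lap n η p) + (co n a (XX n p) * pd (ee n a) φ p) * lap n η p
      + φ p * (co n a (XX n p) * pd (ee n a) (lap n η) p)
      - φ p * pd (ee n a) (pd (ee n a) (xi n η)) p + xi n η p * pd (ee n a) (pd (ee n a) φ) p := by
    intro a
    have e1 : QQ n φ η a =ᶠ[nhds p] fun p => co n a (XX n p) * (φ p * lap n η p) - φ p * pd (ee n a) (xi n η) p
        + xi n η p * pd (ee n a) φ p := by
      filter_upwards [(upper_open n).mem_nhds hp] with y hy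
      rw [QQ, pd_within φ hy]
    have e2 : pd (ee n a) (QQ n φ η a) p = pd (ee n a) (fun p => co n a (XX n p) * (φ p * lap n η p) - φ p * pd (ee n a) (xi n η) p
        + xi n η p * pd (ee n a) φ p) p := by
      unfold pd; rw [e1.fderiv_eq]; rfl
    rw [e2, pd_add_at (((hX a).fun_mul (hd.fun_mul hl)).fun_sub (hd.fun_mul (hxid a))) (hxi.fun_mul (hdd a)),
      pd_sub_at ((hX a).fun_mul (hd.fun_mul hl)) (hd.fun_mul (hxid a)), pd_mul_at (hX a) (hd.fun_mul hl),
      pd_mul_at hd hl, pd_mul_at hd (hxid a), pd_mul_at hxi (hdd a), pd_coX]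
    ring
  rw [Finset.sum_congr rfl fun a _ => e a]
  rw [Finset.sum_add_distrib, Finset.sum_sub_distrib, Finset.sum_add_distrib, Finset.sum_add_distrib,
    Finset.sum_const, ← Finset.mul_sum, ← Finset.mul_sum, ← Finset.mul_sum, ← Finset.sum_mul, ← lap_eq, ← lap_eq, hharm p hp,
    lap_xi hn hη, Finset.card_univ, nsmul_eq_mul, card_opt hn]
  have f1 : ∑ a, co n a (XX n p) * pd (ee n a) φ p = fderivWithin ℝ φ (HH n) p (XX n p) := by
    rw [← pd_within φ hp]; exact (clm_eq_sum n (fderiv ℝ φ p) _).symm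
  have f2 : ∑ a, co n a (XX n p) * pd (ee n a) (lap n η) p = fderiv ℝ (lap n η) p (XX n p) :=
    (clm_eq_sum n (fderiv ℝ _ p) _).symm
  rw [f1, f2, ww]
  ring

theorem pd_z_zero {n : ℕ} {f : Pt n → ℝ} (hf : Differentiable ℝ f) (h0 : ∀ z, f (z, 0) = 0) (i : Fin (n - 1))
    (z : EuclideanSpace ℝ (Fin (n - 1))) : pd (ez n i) f (z, 0) = 0 := by
  have h6 : HasFDerivAt (fun z : EuclideanSpace ℝ (Fin (n - 1)) => (z, (0:ℝ))) (ContinuousLinearMap.inl ℝ _ ℝ) z :=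
      hasFDerivAt_prodMk_left z 0
  have h7 := (hf (z, 0)).hasFDerivAt.comp z h6
  have h8 : f ∘ (fun z : EuclideanSpace ℝ (Fin (n - 1)) => (z, (0:ℝ))) = fun _ => 0 := funext h0
  rw [h8] at h7
  have h9 := h7.unique (hasFDerivAt_const 0 z)
  have := congrArg (fun A => A (EuclideanSpace.single i 1)) h9
  simpa [pd, ez] using this

theorem QQ_bd {n : ℕ} {φ η : Pt n → ℝ} (hη : ContDiff ℝ ∞ η) (h0 : ∀ z, η (z, 0) = 0)
    (hb : ∀ z : EuclideanSpace ℝ (Fin (n - 1)),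
      (1 + ‖z‖ ^ 2) * fderivWithin ℝ φ (HH n) (z, 0) (et n) + n * φ (z, 0) = 0)
    (z : EuclideanSpace ℝ (Fin (n - 1))) : QQ n φ η none (z, 0) = 0 := by
  have h1 : ∀ i z, pd (ez n i) η (z, 0) = 0 := fun i z => pd_z_zero (sm_diff hη) h0 i z
  have h2 : ∀ i z, pd (ez n i) (pd (ez n i) η) (z, 0) = 0 :=
    fun i z => pd_z_zero (sm_diff (pd_smooth hη _)) (h1 i) i z
  have h3 : lap n η (z, 0) = pd (et n) (pd (et n) η) (z, 0) := by simp [lap, h2]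
  have h4 : eul η (z, 0) = 0 := by
    rw [eul_eq, Fintype.sum_option]; simp [co_none, co_some, ee, h1]
  have hN : Differentiable ℝ (NN n) := (sm_diff (NN_smooth n))
  have hE : Differentiable ℝ (eul η) := (sm_diff (eul_smooth hη))
  have hT : Differentiable ℝ (pd (et n) η) := (sm_diff (pd_smooth hη _))
  have hη' := sm_diff hη
  have h5 : pd (et n) (xi n η) (z, 0) = -(‖z‖ ^ 2 + 1) * pd (et n) (pd (et n) η) (z, 0) + n * pd (et n) η (z, 0) := by
    have e3 : ∀ v : Pt n, pd v (fun p : Pt n => -(NN n p + 1)) = fun p => - pd v (NN n) p := by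
      intro v; funext p; unfold pd
      simp
    unfold xi
    rw [pd_add_at (by fun_prop) (by fun_prop), pd_add_at (by fun_prop) (by fun_prop),
      pd_mul_at (f := fun p : Pt n => 2 * p.2) (by fun_prop) (by fun_prop),
      pd_mul_at (f := fun p : Pt n => -(NN n p + 1)) (by fun_prop) (by fun_prop),
      pd_mul_at (f := fun p : Pt n => ((n : ℝ) - 2) * p.2 + n) (by fun_prop) (by fun_prop), e3]
    have h6 := congrFun (pd_NN_ee n none) (z, 0)
    change pd (et n) (NN n) (z, 0) = _ at h6
    simp only [h6, h4, h0]
    simp [co_none, NN]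
  have h6 : xi n η (z, 0) = -(‖z‖ ^ 2 + 1) * pd (et n) η (z, 0) := by
    simp [xi, h4, h0, NN]
  have h7 := hb z
  unfold QQ
  change co n none (XX n (z, 0)) * (φ (z, 0) * lap n η (z, 0)) - φ (z, 0) * pd (et n) (xi n η) (z, 0) +
    xi n η (z, 0) * fderivWithin ℝ φ (HH n) (z, 0) (et n) = 0
  rw [h3, h5, h6, co_none]
  simp only [XX]
  linear_combination (- pd (et n) η (z, 0)) * h7

theorem main_int {n : ℕ} (hn : 3 ≤ n) {φ η : Pt n → ℝ} (hφ : ContDiffOn ℝ 2 φ (HH n)) (hη : ContDiff ℝ ∞ η)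
    (hharm : ∀ p : Pt n, 0 < p.2 → lap n φ p = 0)
    (h0 : ∀ z, η (z, 0) = 0) (hc : HasCompactSupport η)
    (hb : ∀ z : EuclideanSpace ℝ (Fin (n - 1)),
      (1 + ‖z‖ ^ 2) * fderivWithin ℝ φ (HH n) (z, 0) (et n) + n * φ (z, 0) = 0) :
    ∫ p in upperHalf n, ww n φ p * lap n η p = 0 := by
  have e : ∫ p in upperHalf n, ww n φ p * lap n η p = ∫ p in upperHalf n, ∑ a, pd (ee n a) (QQ n φ η a) p :=
    setIntegral_congr_fun (upper_open n).measurableSet fun p hp => (QQ_div hn hφ hη hharm hp).symm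
  rw [e, integral_finsetSum]
  · refine Finset.sum_eq_zero fun a _ => ?_
    rcases a with _ | i
    · exact int_T (QQ_contDiff hφ hη none) (QQ_cs hc none) (QQ_bd hη h0 hb)
    · exact int_Z (QQ_contDiff hφ hη (some i)) (QQ_cs hc (some i)) i
  · intro a _
    exact integ_pd (QQ_contDiff hφ hη a) (QQ_cs hc a) _
def GG (s : ℝ) : ℝ := - Real.smoothTransition (1 - s)
def gg (s : ℝ) : ℝ := deriv GG s

theorem GG_smooth : ContDiff ℝ ∞ GG := by
  unfold GG
  exact (Real.smoothTransition.contDiff.comp (contDiff_const.sub contDiff_id)).neg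

theorem gg_smooth : ContDiff ℝ ∞ gg := by
  have : ContDiff ℝ ∞ (deriv GG) := by
    have h := contDiff_infty_iff_deriv.1 GG_smooth
    exact h.2
  exact this

theorem GG_zero {s : ℝ} (hs : 1 ≤ s) : GG s = 0 := by
  unfold GG; rw [Real.smoothTransition.zero_of_nonpos (by linarith)]; simp

theorem gg_zero {s : ℝ} (hs : 1 < s) : gg s = 0 := by
  have : GG =ᶠ[nhds s] fun _ => 0 := by
    filter_upwards [lt_mem_nhds hs] with y hy
    exact GG_zero hy.le
  unfold gg; rw [this.deriv_eq]; simp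

theorem gg_zero' {s : ℝ} (hs : s < 0) : gg s = 0 := by
  have : GG =ᶠ[nhds s] fun _ => -1 := by
    filter_upwards [gt_mem_nhds hs] with y hy
    unfold GG; rw [Real.smoothTransition.one_of_one_le (by linarith)]
  unfold gg; rw [this.deriv_eq]; simp

theorem dgg_zero {s : ℝ} (hs : 1 < s) : deriv gg s = 0 := by
  have : gg =ᶠ[nhds s] fun _ => 0 := by
    filter_upwards [lt_mem_nhds hs] with y hy
    exact gg_zero hy
  rw [this.deriv_eq]; simp

theorem gg_cs : HasCompactSupport gg := by
  refine HasCompactSupport.intro (isCompact_Icc (a := (0:ℝ)) (b := 1)) ?_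
  intro s hs
  by_cases h : s < 0
  · exact gg_zero' h
  · refine gg_zero ?_
    by_contra h'
    exact hs ⟨not_lt.1 h, not_lt.1 h'⟩

theorem gg_lip : ∃ C : ℝ, 0 ≤ C ∧ ∀ a b, |gg a - gg b| ≤ C * |a - b| := by
  obtain ⟨C, hC⟩ := gg_smooth.lipschitzWith_of_hasCompactSupport gg_cs (by simp)
  refine ⟨C, C.2, fun a b => ?_⟩
  have := hC.dist_le_mul a b
  simpa [Real.dist_eq] using this

theorem gg_nonneg (s : ℝ) : 0 ≤ gg s := by
  have : Monotone GG := by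
    intro a b hab
    unfold GG
    have := Real.smoothTransition.monotone (show 1 - b ≤ 1 - a by linarith)
    linarith
  exact this.deriv_nonneg

theorem gg_pos : ∃ s, 0 < s ∧ s < 1 ∧ 0 < gg s := by
  obtain ⟨s, hs, h⟩ := exists_deriv_eq_slope GG (show (0:ℝ) < 1 by norm_num) GG_smooth.continuous.continuousOn
    ((GG_smooth.differentiable (by simp)).differentiableOn)
  refine ⟨s, hs.1, hs.2, ?_⟩
  unfold gg; rw [h]
  simp [GG]

theorem pd_rad {n : ℕ} {F : ℝ → ℝ} (hF : Differentiable ℝ F) (c : ℝ) (q v : Pt n) :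
    pd v (fun y => F (c * NN n (y - q))) = fun y => deriv F (c * NN n (y - q)) * (c * pd v (NN n) (y - q)) := by
  funext y
  have hN : HasFDerivAt (NN n) (fderiv ℝ (NN n) (y - q)) (y - q) := (sm_diff (NN_smooth n) _).hasFDerivAt
  have h1 : HasFDerivAt (fun y => NN n (y - q)) (fderiv ℝ (NN n) (y - q)) y := by
    exact hN.comp y ((hasFDerivAt_id y).sub_const q)
  have h2 := ((hF (c * NN n (y - q))).hasDerivAt).comp_hasFDerivAt y (h1.const_mul c)
  unfold pd
  have h3 : (fun y => F (c * NN n (y - q))) = F ∘ fun y => c * NN n (y - q) := rfl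
  rw [h3, h2.fderiv]
  simp

theorem rad_smooth {n : ℕ} {F : ℝ → ℝ} (hF : ContDiff ℝ ∞ F) (c : ℝ) (q : Pt n) :
    ContDiff ℝ ∞ (fun y => F (c * NN n (y - q))) := by
  have := NN_smooth n
  fun_prop

theorem lap_rad {n : ℕ} (hn : 3 ≤ n) (c : ℝ) (q y : Pt n) :
    lap n (fun y => GG (c * NN n (y - q))) y =
      2 * n * c * gg (c * NN n (y - q)) + 4 * c ^ 2 * NN n (y - q) * deriv gg (c * NN n (y - q)) := by
  rw [lap_eq]
  have e : ∀ a, pd (ee n a) (pd (ee n a) (fun y => GG (c * NN n (y - q)))) y =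
      2 * c * gg (c * NN n (y - q)) +
        4 * c ^ 2 * deriv gg (c * NN n (y - q)) * (co n a (y - q) * co n a (y - q)) := by
    intro a
    rw [pd_rad (GG_smooth.differentiable (by simp)), pd_NN_ee]
    have hg := sm_diff (rad_smooth gg_smooth c q)
    have := congrFun (pd_rad (gg_smooth.differentiable (by simp)) c q (ee n a)) y
    rw [pd_NN_ee] at this
    change pd (ee n a) (fun y => gg (c * NN n (y - q)) * (c * (2 * co n a (y - q)))) y = _
    rw [pd_mul_at (f := fun y => gg (c * NN n (y - q))) (g := fun y => c * (2 * co n a (y - q))) (hg y) (by fun_prop), this]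
    have h3 : pd (ee n a) (fun y => c * (2 * co n a (y - q))) y = c * 2 := by
      have : (fun y => c * (2 * co n a (y - q))) = fun y => ((c * 2) • co n a) y + (- (c * 2) * co n a q) := by
        funext y; simp; ring
      rw [this, pd_add_at (by fun_prop) (by fun_prop), pd_clm, pd_const]
      simp [co_ee]
    rw [h3]; ring
  rw [Finset.sum_congr rfl fun a _ => e a, Finset.sum_add_distrib, Finset.sum_const, ← Finset.mul_sum, ← NN_eq,
    Finset.card_univ, nsmul_eq_mul, card_opt hn]
  ring

theorem lap_sub {n : ℕ} {f g : Pt n → ℝ} (hf : ContDiff ℝ ∞ f) (hg : ContDiff ℝ ∞ g) (p : Pt n) :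
    lap n (fun y => f y - g y) p = lap n f p - lap n g p := by
  have h := lap_add (f := fun y => f y - g y) (hf.sub hg) hg p
  simp only [sub_add_cancel] at h
  have h2 : (fun y => f y) = f := rfl
  linarith

def rf {n : ℕ} (q : Pt n) : Pt n := (q.1, - q.2)

def et2 (n : ℕ) (q : Pt n) (l : ℝ) (y : Pt n) : ℝ :=
  GG (l ^ 2 * NN n (y - q)) - GG (l ^ 2 * NN n (y - rf q))

def kk (n : ℕ) (q : Pt n) (l : ℝ) (y : Pt n) : ℝ :=
  l ^ n * (gg (l ^ 2 * NN n (y - q)) - gg (l ^ 2 * NN n (y - rf q)))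

def dk (n : ℕ) (q : Pt n) (l : ℝ) (y : Pt n) : ℝ :=
  n * l ^ (n - 1) * (gg (l ^ 2 * NN n (y - q)) - gg (l ^ 2 * NN n (y - rf q))) +
  l ^ n * (deriv gg (l ^ 2 * NN n (y - q)) * (2 * l * NN n (y - q))
    - deriv gg (l ^ 2 * NN n (y - rf q)) * (2 * l * NN n (y - rf q)))

theorem kk_deriv (n : ℕ) (q : Pt n) (l : ℝ) (y : Pt n) : HasDerivAt (fun l => kk n q l y) (dk n q l y) l := by
  have h : ∀ N : ℝ, HasDerivAt (fun l : ℝ => gg (l ^ 2 * N)) (deriv gg (l ^ 2 * N) * (2 * l * N)) l := by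
    intro N
    have h1 : HasDerivAt (fun l : ℝ => l ^ 2 * N) (2 * l * N) l := by
      simpa using (hasDerivAt_pow 2 l).mul_const N
    exact ((gg_smooth.differentiable (by simp)) _).hasDerivAt.comp l h1
  exact (hasDerivAt_pow n l).mul ((h _).sub (h _))

theorem dk_eq {n : ℕ} (hn : 3 ≤ n) (q : Pt n) (l : ℝ) (y : Pt n) :
    dk n q l y = (1 / 2) * l ^ (n - 3) * lap n (et2 n q l) y := by
  unfold et2
  rw [lap_sub (rad_smooth GG_smooth _ q) (rad_smooth GG_smooth _ (rf q)), lap_rad hn, lap_rad hn, dk]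
  have h1 : l ^ n = l ^ (n - 3) * l ^ 3 := by rw [← pow_add]; congr 1; omega
  have h2 : l ^ (n - 1) = l ^ (n - 3) * l ^ 2 := by rw [← pow_add]; congr 1; omega
  rw [h1, h2]; ring

theorem dk_cont (n : ℕ) (q : Pt n) : Continuous (fun x : ℝ × Pt n => dk n q x.1 x.2) := by
  have h1 := gg_smooth.continuous
  have h2 : Continuous (deriv gg) := (contDiff_infty_iff_deriv.1 gg_smooth).2.continuous
  have h3 := (NN_smooth n).continuous
  unfold dk
  fun_prop

theorem kk_cont (n : ℕ) (q : Pt n) (l : ℝ) : Continuous (kk n q l) := by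
  have h1 := gg_smooth.continuous
  have h3 := (NN_smooth n).continuous
  unfold kk
  fun_prop

theorem et2_smooth (n : ℕ) (q : Pt n) (l : ℝ) : ContDiff ℝ ∞ (et2 n q l) :=
  (rad_smooth GG_smooth _ q).sub (rad_smooth GG_smooth _ (rf q))

theorem et2_zero (n : ℕ) (q : Pt n) (l : ℝ) (z) : et2 n q l (z, 0) = 0 := by
  simp [et2, NN, rf]

theorem norm_le_NN (n : ℕ) (y : Pt n) : ‖y‖ ^ 2 ≤ NN n y := by
  rw [Prod.norm_def, NN]
  rcases max_cases ‖y.1‖ ‖y.2‖ with h | h <;> rw [h.1]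
  · nlinarith [sq_nonneg y.2]
  · rw [Real.norm_eq_abs, sq_abs]; nlinarith [sq_nonneg ‖y.1‖]

theorem norm_rf {n : ℕ} (q : Pt n) : ‖rf q‖ = ‖q‖ := by
  simp [Prod.norm_def, rf]

theorem far {n : ℕ} {q y : Pt n} {l : ℝ} (hl : 0 < l) (h : ‖q‖ + 1 / l < ‖y‖) : 1 < l ^ 2 * NN n (y - q) := by
  have h1 : 1 / l < ‖y - q‖ := by
    have := norm_sub_norm_le y q
    linarith
  have h2 : 1 < l * ‖y - q‖ := by
    rw [div_lt_iff₀ hl] at h1; linarith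
  have h3 := norm_le_NN n (y - q)
  have h4 : 1 < (l * ‖y - q‖) ^ 2 := by nlinarith
  nlinarith [sq_nonneg l]

theorem et2_cs (n : ℕ) (q : Pt n) {l : ℝ} (hl : 0 < l) : HasCompactSupport (et2 n q l) := by
  refine HasCompactSupport.intro (isCompact_closedBall (0 : Pt n) (‖q‖ + 1 / l)) ?_
  intro y hy
  rw [mem_closedBall_zero_iff, not_le] at hy
  rw [et2, GG_zero (far hl hy).le, GG_zero (far hl (by rwa [norm_rf])).le]; simp

theorem kk_far {n : ℕ} {q y : Pt n} {l : ℝ} (hl : 0 < l) (h : ‖q‖ + 1 / l < ‖y‖) : kk n q l y = 0 := by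
  rw [kk, gg_zero (far hl h), gg_zero (far hl (by rwa [norm_rf]))]; simp

theorem dk_far {n : ℕ} {q y : Pt n} {l : ℝ} (hl : 0 < l) (h : ‖q‖ + 1 / l < ‖y‖) : dk n q l y = 0 := by
  have h2 : ‖rf q‖ + 1 / l < ‖y‖ := by rwa [norm_rf]
  rw [dk, gg_zero (far hl h), gg_zero (far hl h2), dgg_zero (far hl h), dgg_zero (far hl h2)]; simp

theorem ww_cont {n : ℕ} {φ : Pt n → ℝ} (hφ : ContDiffOn ℝ 2 φ (HH n)) : ContinuousOn (ww n φ) (HH n) := by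
  have h1 : ContinuousOn (fun p => fderivWithin ℝ φ (HH n) p (XX n p)) (HH n) :=
    (hφ.continuousOn_fderivWithin (HH_udiff n) (by norm_num)).clm_apply (XX_smooth n).continuous.continuousOn
  have h2 := hφ.continuousOn
  unfold ww
  fun_prop

def MM (n : ℕ) (φ : Pt n → ℝ) (q : Pt n) (l : ℝ) : ℝ := ∫ y in upperHalf n, ww n φ y * kk n q l y

theorem wk_int {n : ℕ} {φ : Pt n → ℝ} (hφ : ContDiffOn ℝ 2 φ (HH n)) (q : Pt n) {l : ℝ} (hl : 0 < l) :
    IntegrableOn (fun y => ww n φ y * kk n q l y) (upperHalf n) := by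
  refine integ_cs ((ww_cont hφ).mul (kk_cont n q l).continuousOn) (isCompact_closedBall (0 : Pt n) (‖q‖ + 1 / l)) ?_
  intro y hy
  rw [mem_closedBall_zero_iff, not_le] at hy
  rw [kk_far hl hy]; simp

theorem MM_deriv {n : ℕ} (hn : 3 ≤ n) {φ : Pt n → ℝ} (hφ : ContDiffOn ℝ 2 φ (HH n))
    (hharm : ∀ p : Pt n, 0 < p.2 → lap n φ p = 0)
    (hb : ∀ z : EuclideanSpace ℝ (Fin (n - 1)),
      (1 + ‖z‖ ^ 2) * fderivWithin ℝ φ (HH n) (z, 0) (et n) + n * φ (z, 0) = 0)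
    (q : Pt n) {l : ℝ} (hl : 0 < l) : HasDerivAt (MM n φ q) 0 l := by
  have hz : ∫ y in upperHalf n, ww n φ y * dk n q l y = 0 := by
    have h := main_int hn hφ (et2_smooth n q l) hharm (et2_zero n q l) (et2_cs n q hl) hb
    have e : ∀ y, ww n φ y * dk n q l y = (1 / 2) * l ^ (n - 3) * (ww n φ y * lap n (et2 n q l) y) := by
      intro y; rw [dk_eq hn]; ring
    simp only [e]
    rw [integral_const_mul, h, mul_zero]
  have hw := ww_cont hφ
  set K := Metric.closedBall (0 : Pt n) (‖q‖ + 2 / l) with hK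
  have hKc : IsCompact K := isCompact_closedBall _ _
  have hK2 : IsCompact (Set.Icc (l / 2) (2 * l) ×ˢ (K ∩ HH n)) :=
    isCompact_Icc.prod (hKc.inter_right (HH_closed n))
  obtain ⟨C, hC⟩ := hK2.exists_bound_of_continuousOn (f := fun x : ℝ × Pt n => ww n φ x.2 * dk n q x.1 x.2)
    (by
      refine ContinuousOn.mul ?_ (dk_cont n q).continuousOn
      exact hw.comp continuousOn_snd (fun x hx => hx.2.2))
  have hmU := (upper_open n).measurableSet
  have key := hasDerivAt_integral_of_dominated_loc_of_deriv_le (μ := volume.restrict (upperHalf n))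
    (F := fun l y => ww n φ y * kk n q l y) (F' := fun l y => ww n φ y * dk n q l y) (x₀ := l)
    (s := Set.Ioo (l / 2) (2 * l)) (bound := K.indicator fun _ => C)
    (Ioo_mem_nhds (by linarith) (by linarith)) ?_ (wk_int hφ q hl) ?_ ?_ ?_ ?_
  · have := key.2
    rw [hz] at this
    exact this
  · refine Filter.Eventually.of_forall fun x => ?_
    exact ((hw.mono (upper_sub n)).mul (kk_cont n q x).continuousOn).aestronglyMeasurable hmU
  · have : Continuous (dk n q l) := (dk_cont n q).comp (by fun_prop : Continuous fun y : Pt n => (l, y))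
    exact ((hw.mono (upper_sub n)).mul this.continuousOn).aestronglyMeasurable hmU
  · refine (ae_restrict_iff' hmU).2 (Filter.Eventually.of_forall fun y hy x hx => ?_)
    by_cases hyK : y ∈ K
    · rw [Set.indicator_of_mem hyK]
      exact hC (x, y) ⟨⟨hx.1.le, hx.2.le⟩, hyK, upper_sub n hy⟩
    · rw [Set.indicator_of_notMem hyK]
      rw [hK, mem_closedBall_zero_iff, not_le] at hyK
      have hx0 : 0 < x := by linarith [hx.1]
      have : 1 / x ≤ 2 / l := by
        rw [div_le_div_iff₀ hx0 hl]; linarith [hx.1]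
      rw [dk_far hx0 (by linarith)]; simp
  · refine Integrable.mono_measure ?_ Measure.restrict_le_self
    rw [integrable_indicator_iff hKc.measurableSet]
    exact integrableOn_const hKc.measure_lt_top.ne
  · refine Filter.Eventually.of_forall fun y x _ => ?_
    exact (kk_deriv n q x y).const_mul _
def en (n : ℕ) (φ : Pt n → ℝ) (p : Pt n) : ℝ :=
  (φ p) ^ 2 + ((∑ i : Fin (n - 1), (pd (ez n i) φ p) ^ 2) + (pd (et n) φ p) ^ 2)

theorem en_eq (n : ℕ) (φ : Pt n → ℝ) (p : Pt n) : en n φ p = φ p ^ 2 + ∑ a, pd (ee n a) φ p ^ 2 := by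
  rw [en, Fintype.sum_option, add_comm (∑ i : Fin (n - 1), (pd (ez n i) φ p) ^ 2)]; rfl

theorem en_nonneg (n : ℕ) (φ : Pt n → ℝ) (p : Pt n) : 0 ≤ en n φ p := by
  rw [en_eq]; positivity

theorem amgm {x ε : ℝ} (hε : 0 < ε) : |x| ≤ ε + x ^ 2 / ε := by
  have h : |x| * ε ≤ ε * ε + x ^ 2 := by
    rw [← sq_abs x]; nlinarith [sq_nonneg (|x| - ε), abs_nonneg x, sq_nonneg (|x|+ε)]
  have h2 : ε + x ^ 2 / ε = (ε * ε + x ^ 2) / ε := by field_simp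
  rw [h2, le_div_iff₀ hε]; exact h

theorem coX_bound {n : ℕ} {p : Pt n} {ρ : ℝ} (hρ : 1 ≤ ρ) (hpρ : ‖p‖ ≤ ρ) (a : Option (Fin (n - 1))) :
    |co n a (XX n p)| ≤ 2 * ρ ^ 2 := by
  have h1 : ‖p.1‖ ≤ ρ := (norm_fst_le p).trans hpρ
  have h2 : |p.2| ≤ ρ := (norm_snd_le p).trans hpρ
  rcases a with _ | i
  · rw [co_none]; simp only [XX]
    have := norm_nonneg p.1
    have h3 : p.2 ^ 2 ≤ ρ ^ 2 := sq_le_sq' (by linarith [(abs_le.1 h2).1]) (abs_le.1 h2).2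
    have h4 : ‖p.1‖ ^ 2 ≤ ρ ^ 2 := by nlinarith
    rw [abs_le]; constructor <;> nlinarith [sq_nonneg p.2, sq_nonneg ‖p.1‖]
  · rw [co_some]
    have h3 : |p.1 i| ≤ ρ := (PiLp.norm_apply_le p.1 i).trans h1
    simp only [XX, PiLp.smul_apply, smul_eq_mul]
    rw [abs_mul, abs_mul, abs_two]
    have := mul_le_mul h2 h3 (abs_nonneg _) (by linarith)
    nlinarith

theorem ww_bound {n : ℕ} (hn : 3 ≤ n) (φ : Pt n → ℝ) {p : Pt n} (hp : p ∈ upperHalf n) {ρ ε : ℝ} (hρ : 1 ≤ ρ)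
    (hpρ : ‖p‖ ≤ ρ) (hε : 0 < ε) :
    |ww n φ p| ≤ 2 * n * ρ ^ 2 * ((n + 1) * ε + en n φ p / ε) := by
  have hnR : (3 : ℝ) ≤ n := by exact_mod_cast hn
  have h2 : |p.2| ≤ ρ := (norm_snd_le p).trans hpρ
  have hp2 : 0 < p.2 := hp
  have h2' := (abs_le.1 h2).2
  have e1 : ww n φ p = (∑ a, co n a (XX n p) * pd (ee n a) φ p) + ((n - 2) * p.2 - n) * φ p := by
    rw [ww, ← pd_within φ hp, pd, clm_eq_sum]; rfl
  have b1 : |∑ a, co n a (XX n p) * pd (ee n a) φ p| ≤ ∑ a, 2 * ρ ^ 2 * (ε + pd (ee n a) φ p ^ 2 / ε) := by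
    refine (Finset.abs_sum_le_sum_abs _ _).trans (Finset.sum_le_sum fun a _ => ?_)
    rw [abs_mul]
    exact mul_le_mul (coX_bound hρ hpρ a) (amgm hε) (abs_nonneg _) (by positivity)
  have b2 : |((n - 2) * p.2 - n) * φ p| ≤ 2 * n * ρ ^ 2 * (ε + φ p ^ 2 / ε) := by
    rw [abs_mul]
    refine mul_le_mul ?_ (amgm hε) (abs_nonneg _) (by positivity)
    have h5 : ρ ≤ ρ ^ 2 := by nlinarith
    rw [abs_le]; constructor <;> nlinarith [mul_nonneg (by linarith : (0:ℝ) ≤ n - 2) hp2.le]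
  rw [← Finset.mul_sum, Finset.sum_add_distrib, Finset.sum_const, Finset.card_univ, nsmul_eq_mul, card_opt hn,
    ← Finset.sum_div] at b1
  rw [e1, en_eq]
  have hS : 0 ≤ ∑ a, pd (ee n a) φ p ^ 2 := by positivity
  set S := ∑ a, pd (ee n a) φ p ^ 2
  refine (abs_add_le _ _).trans ((add_le_add b1 b2).trans ?_)
  have h6 : 0 ≤ ρ ^ 2 * (n * ε + S / ε) := by positivity
  have h7 : 2 * ρ ^ 2 * (n * ε + S / ε) ≤ 2 * n * ρ ^ 2 * (n * ε + S / ε) := by nlinarith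
  refine (add_le_add h7 le_rfl).trans (le_of_eq ?_)
  rw [add_div]; ring

theorem kk_bound (n : ℕ) (q : Pt n) : ∃ C : ℝ, 0 ≤ C ∧ ∀ l : ℝ, 0 < l → ∀ y : Pt n, ‖y‖ ≤ (1 + ‖q‖) / l →
    |kk n q l y| ≤ C * l ^ (n + 1) := by
  obtain ⟨L, hL, hLip⟩ := gg_lip
  refine ⟨4 * L * (1 + ‖q‖) * ‖q‖, by positivity, ?_⟩
  intro l hl y hy
  have h1 := hLip (l ^ 2 * NN n (y - q)) (l ^ 2 * NN n (y - rf q))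
  have h2 : l ^ 2 * NN n (y - q) - l ^ 2 * NN n (y - rf q) = - (4 * l ^ 2) * (y.2 * q.2) := by
    simp [NN, rf]; ring
  rw [h2, abs_mul, abs_mul, abs_neg, abs_of_nonneg (by positivity : (0:ℝ) ≤ 4 * l ^ 2)] at h1
  have h3 : |y.2| ≤ (1 + ‖q‖) / l := (norm_snd_le y).trans hy
  have h4 : |q.2| ≤ ‖q‖ := norm_snd_le q
  have h5 : |y.2| * |q.2| ≤ (1 + ‖q‖) / l * ‖q‖ := mul_le_mul h3 h4 (abs_nonneg _) (by positivity)
  rw [kk, abs_mul, abs_of_nonneg (by positivity : (0:ℝ) ≤ l ^ n)]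
  calc l ^ n * _ ≤ l ^ n * (L * (4 * l ^ 2 * ((1 + ‖q‖) / l * ‖q‖))) := by
        refine mul_le_mul_of_nonneg_left (h1.trans ?_) (by positivity)
        gcongr
    _ = _ := by
        field_simp; ring

theorem MM_small {n : ℕ} (hn : 3 ≤ n) {φ : Pt n → ℝ}
    (hE : IntegrableOn (en n φ) (upperHalf n)) (q : Pt n) :
    ∃ C : ℝ, ∀ δ : ℝ, 0 < δ → δ ≤ 1 → |MM n φ q (δ ^ 2)| ≤ C * δ := by
  obtain ⟨C, hC, hk⟩ := kk_bound n q
  set A := 1 + ‖q‖ with hA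
  have hA1 : 1 ≤ A := by rw [hA]; linarith [norm_nonneg q]
  set E := ∫ y in upperHalf n, en n φ y with hEd
  have hE0 : 0 ≤ E := integral_nonneg fun y => en_nonneg n φ y
  set V := volume.real (Metric.closedBall (0 : Pt n) 1) with hV
  refine ⟨C * (2 * n) * A ^ 2 * ((n + 1) * A ^ n * V + E), fun δ hδ hδ1 => ?_⟩
  set l := δ ^ 2 with hl
  have hl0 : 0 < l := by positivity
  have hl1 : l ≤ 1 := by rw [hl]; nlinarith
  set ρ := A / l with hρd
  have hρ0 : 0 < ρ := by positivity
  have hρ : 1 ≤ ρ := by rw [hρd, le_div_iff₀ hl0]; linarith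
  set ε := δ ^ 3 with hε
  have hε0 : 0 < ε := by positivity
  set B := Metric.closedBall (0 : Pt n) ρ with hB
  have hBc : IsCompact B := isCompact_closedBall _ _
  set c := C * l ^ (n + 1) * (2 * n * ρ ^ 2) with hc
  have hc0 : 0 ≤ c := by positivity
  have hBi : Integrable (B.indicator fun _ => (1:ℝ)) (volume.restrict (upperHalf n)) := by
    refine Integrable.mono_measure ?_ Measure.restrict_le_self
    rw [integrable_indicator_iff hBc.measurableSet]
    exact integrableOn_const hBc.measure_lt_top.ne
  have h1 : ‖MM n φ q l‖ ≤ ∫ y in upperHalf n, c * ((n + 1) * ε * B.indicator (fun _ => (1:ℝ)) y + en n φ y / ε) := by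
    refine norm_integral_le_of_norm_le (((hBi.const_mul _).add (hE.div_const ε)).const_mul c) ?_
    refine (ae_restrict_iff' (upper_open n).measurableSet).2 (Filter.Eventually.of_forall fun y hy => ?_)
    by_cases hyB : y ∈ B
    · rw [Set.indicator_of_mem hyB]
      rw [hB, mem_closedBall_zero_iff] at hyB
      have b1 := ww_bound hn φ hy hρ hyB hε0
      have b2 := hk l hl0 y hyB
      rw [Real.norm_eq_abs, abs_mul]
      have := mul_le_mul b1 b2 (abs_nonneg _) (by have := en_nonneg n φ y; positivity)
      refine this.trans (le_of_eq ?_)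
      rw [hc]; ring
    · rw [Set.indicator_of_notMem hyB]
      rw [hB, mem_closedBall_zero_iff, not_le] at hyB
      have : ‖q‖ + 1 / l < ‖y‖ := by
        refine lt_of_le_of_lt ?_ hyB
        rw [hρd, hA, add_div, add_comm]
        have : ‖q‖ ≤ ‖q‖ / l := by rw [le_div_iff₀ hl0]; nlinarith [norm_nonneg q]
        linarith
      rw [kk_far hl0 this]
      have := en_nonneg n φ y
      simp only [mul_zero, norm_zero, zero_add]
      positivity
  have h2 : ∫ y in upperHalf n, B.indicator (fun _ => (1:ℝ)) y ≤ ρ ^ n * V := by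
    rw [integral_indicator hBc.measurableSet, setIntegral_const, smul_eq_mul, mul_one]
    haveI : (volume : Measure (Pt n)).IsAddHaarMeasure := Measure.prod.instIsAddHaarMeasure _ _
    have hv : volume.real B = ρ ^ n * V := by
      rw [hB, hV, Measure.real, Measure.addHaar_closedBall _ _ hρ0.le, ENNReal.toReal_mul,
        ENNReal.toReal_ofReal (by positivity), Measure.real, Measure.addHaar_closedBall (volume : Measure (Pt n)) _ zero_le_one]
      have hd : Module.finrank ℝ (Pt n) = n := by
        simp; omega
      rw [hd]; simp
    rw [← hv]
    refine ENNReal.toReal_mono hBc.measure_lt_top.ne ?_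
    exact Measure.restrict_apply_le _ _
  rw [integral_const_mul, integral_add (hBi.const_mul _) (hE.div_const ε), integral_const_mul, integral_div, ← hEd] at h1
  refine h1.trans ?_
  have h3 : c = C * (2 * n) * A ^ 2 * l ^ (n - 1) := by
    have : l ^ (n + 1) = l ^ (n - 1) * l ^ 2 := by rw [← pow_add]; congr 1; omega
    rw [hc, this, hρd]; field_simp
  have h4 : l ^ (n - 1) * (ε * ρ ^ n) = A ^ n * δ := by
    have e1 : l ^ n = l ^ (n - 1) * l := by rw [← pow_succ]; congr 1; omega
    rw [hρd, div_pow, e1, hε]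
    have : l ^ (n - 1) ≠ 0 := by positivity
    field_simp
    rw [hl]
  have h5 : l ^ (n - 1) / ε ≤ δ := by
    rw [div_le_iff₀ hε0, hl, hε, ← pow_mul, ← pow_succ']
    exact pow_le_pow_of_le_one hδ.le hδ1 (by omega)
  calc c * ((n + 1) * ε * (∫ y in upperHalf n, B.indicator (fun _ => (1:ℝ)) y) + E / ε)
      ≤ c * ((n + 1) * ε * (ρ ^ n * V) + E / ε) := by gcongr
    _ = C * (2 * n) * A ^ 2 * ((n + 1) * V * (l ^ (n - 1) * (ε * ρ ^ n)) + E * (l ^ (n - 1) / ε)) := by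
        rw [h3]; ring
    _ ≤ C * (2 * n) * A ^ 2 * ((n + 1) * V * (A ^ n * δ) + E * δ) := by
        rw [h4]; gcongr
    _ = _ := by ring

theorem MM_zero {n : ℕ} (hn : 3 ≤ n) {φ : Pt n → ℝ} (hφ : ContDiffOn ℝ 2 φ (HH n))
    (hharm : ∀ p : Pt n, 0 < p.2 → lap n φ p = 0)
    (hb : ∀ z : EuclideanSpace ℝ (Fin (n - 1)),
      (1 + ‖z‖ ^ 2) * fderivWithin ℝ φ (HH n) (z, 0) (et n) + n * φ (z, 0) = 0)
    (hE : IntegrableOn (en n φ) (upperHalf n)) (q : Pt n) {l : ℝ} (hl : 0 < l) : MM n φ q l = 0 := by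
  obtain ⟨C, hC⟩ := MM_small hn hE q
  have hder : ∀ x ∈ Set.Ioi (0:ℝ), HasDerivAt (MM n φ q) 0 x := fun x hx => MM_deriv hn hφ hharm hb q hx
  have hconst : ∀ x ∈ Set.Ioi (0:ℝ), MM n φ q x = MM n φ q l := by
    intro x hx
    exact isOpen_Ioi.is_const_of_deriv_eq_zero isPreconnected_Ioi
      (fun y hy => (hder y hy).differentiableAt.differentiableWithinAt) (fun y hy => (hder y hy).deriv) hx hl
  have hlim : Filter.Tendsto (fun δ : ℝ => C * δ) (nhdsWithin 0 (Set.Ioi 0)) (nhds 0) := by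
    have : Filter.Tendsto (fun δ : ℝ => C * δ) (nhds 0) (nhds (C * 0)) := (continuous_const.mul continuous_id).tendsto 0
    rw [mul_zero] at this
    exact this.mono_left nhdsWithin_le_nhds
  have : |MM n φ q l| ≤ 0 := by
    refine ge_of_tendsto hlim ?_
    filter_upwards [Ioc_mem_nhdsGT (show (0:ℝ) < 1 by norm_num)] with δ hδ
    rw [← hconst (δ ^ 2) (by have := hδ.1; simp; positivity)]
    exact hC δ hδ.1 hδ.2
  exact abs_nonpos_iff.1 this

theorem ww_zero {n : ℕ} (hn : 3 ≤ n) {φ : Pt n → ℝ} (hφ : ContDiffOn ℝ 2 φ (HH n))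
    (hharm : ∀ p : Pt n, 0 < p.2 → lap n φ p = 0)
    (hb : ∀ z : EuclideanSpace ℝ (Fin (n - 1)),
      (1 + ‖z‖ ^ 2) * fderivWithin ℝ φ (HH n) (z, 0) (et n) + n * φ (z, 0) = 0)
    (hE : IntegrableOn (en n φ) (upperHalf n)) (q : Pt n) (hq : q ∈ upperHalf n) : ww n φ q = 0 := by
  by_contra hne
  have hq2 : 0 < q.2 := hq
  have hcw : ContinuousAt (fun y => ww n φ q * ww n φ y) q :=
    continuousAt_const.mul ((ww_cont hφ).continuousAt (HH_nhds hq))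
  have hpos : 0 < ww n φ q * ww n φ q := mul_self_pos.2 hne
  have hev : ∀ᶠ y in nhds q, 0 < ww n φ q * ww n φ y := hcw.eventually (lt_mem_nhds hpos)
  obtain ⟨r, hr, hball⟩ := Metric.eventually_nhds_iff_ball.1 hev
  obtain ⟨s, hs0, hs1, hgs⟩ := gg_pos
  set m := min r q.2 with hm
  have hm0 : 0 < m := lt_min hr hq2
  set l := 2 / m with hl
  have hl0 : 0 < l := by positivity
  have hlm : l * m = 2 := by rw [hl]; field_simp
  have near : ∀ y, gg (l ^ 2 * NN n (y - q)) ≠ 0 → y ∈ Metric.ball q m := by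
    intro y hy
    have h1 : l ^ 2 * NN n (y - q) ≤ 1 := by
      by_contra h; exact hy (gg_zero (not_le.1 h))
    have h2 := norm_le_NN n (y - q)
    rw [mem_ball_iff_norm]
    by_contra h
    rw [not_lt] at h
    have h3 : 2 ≤ l * ‖y - q‖ := by nlinarith
    nlinarith [sq_nonneg l]
  have refl0 : ∀ y ∈ upperHalf n, gg (l ^ 2 * NN n (y - rf q)) = 0 := by
    intro y hy
    apply gg_zero
    have hy2 : 0 < y.2 := hy
    have h1 : m ≤ q.2 := min_le_right _ _
    have h2 : m ^ 2 ≤ NN n (y - rf q) := by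
      simp only [NN, rf, Prod.snd_sub, Prod.fst_sub]
      nlinarith [sq_nonneg ‖y.1 - q.1‖]
    have h3 : (l * m) ^ 2 = 4 := by rw [hlm]; norm_num
    nlinarith [sq_nonneg l]
  have hM := MM_zero hn hφ hharm hb hE q hl0
  have hint := (wk_int hφ q hl0).const_mul (ww n φ q)
  have hzero : ∫ y in upperHalf n, ww n φ q * (ww n φ y * kk n q l y) = 0 := by
    rw [integral_const_mul]; change _ * MM n φ q l = 0; rw [hM, mul_zero]
  have hk : ∀ y ∈ upperHalf n, ww n φ q * (ww n φ y * kk n q l y) =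
      (ww n φ q * ww n φ y) * (l ^ n * gg (l ^ 2 * NN n (y - q))) := by
    intro y hy; rw [kk, refl0 y hy]; ring
  have hnn : 0 ≤ᵐ[volume.restrict (upperHalf n)] fun y => ww n φ q * (ww n φ y * kk n q l y) := by
    refine (ae_restrict_iff' (upper_open n).measurableSet).2 (Filter.Eventually.of_forall fun y hy => ?_)
    change (0:ℝ) ≤ ww n φ q * (ww n φ y * kk n q l y)
    rw [hk y hy]
    by_cases h : gg (l ^ 2 * NN n (y - q)) = 0
    · rw [h]; simp
    · have h1 := hball y (Metric.ball_subset_ball (min_le_left _ _) (near y h))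
      have := gg_nonneg (l ^ 2 * NN n (y - q))
      positivity
  have hae := (integral_eq_zero_iff_of_nonneg_ae hnn hint).1 hzero
  rw [Filter.EventuallyEq, ae_restrict_iff' (upper_open n).measurableSet] at hae
  set O : Set (Pt n) := {y | 0 < gg (l ^ 2 * NN n (y - q))} ∩ upperHalf n with hO
  have hOo : IsOpen O := by
    refine IsOpen.inter (isOpen_lt continuous_const ?_) (upper_open n)
    exact (rad_smooth gg_smooth (l ^ 2) q).continuous
  have hOn : O.Nonempty := by
    refine ⟨q + (0, Real.sqrt s / l), ?_, ?_⟩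
    · have : l ^ 2 * NN n (q + (0, Real.sqrt s / l) - q) = s := by
        simp [NN, div_pow, Real.sq_sqrt hs0.le]; field_simp
      simp only [Set.mem_ofPred_eq]; rw [this]; exact hgs
    · change 0 < q.2 + Real.sqrt s / l
      positivity
  have hOm : 0 < volume O := hOo.measure_pos _ hOn
  have : volume O = 0 := by
    refine measure_mono_null ?_ (ae_iff.1 hae)
    intro y hy
    have hy1 : 0 < gg (l ^ 2 * NN n (y - q)) := hy.1
    simp only [Set.mem_ofPred_eq, Classical.not_imp]
    refine ⟨hy.2, ?_⟩
    rw [hk y hy.2]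
    have h1 := hball y (Metric.ball_subset_ball (min_le_left _ _) (near y hy1.ne'))
    simp only [Pi.zero_apply]
    positivity
  exact hOm.ne' this

def DD (n : ℕ) (p : Pt n) : ℝ := (1 + p.2) ^ 2 + ‖p.1‖ ^ 2

theorem DD_pos {n : ℕ} {p : Pt n} (hp : 0 ≤ p.2) : 0 < DD n p := by
  unfold DD; positivity

theorem DD_hasFDeriv (n : ℕ) (p : Pt n) : HasFDerivAt (DD n)
    ((2 * (1 + p.2)) • ContinuousLinearMap.snd ℝ (EuclideanSpace ℝ (Fin (n - 1))) ℝ +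
      (2 : ℝ) • (innerSL ℝ p.1).comp (ContinuousLinearMap.fst ℝ (EuclideanSpace ℝ (Fin (n - 1))) ℝ)) p := by
  have h1 : HasFDerivAt (fun p : Pt n => 1 + p.2) (ContinuousLinearMap.snd ℝ (EuclideanSpace ℝ (Fin (n - 1))) ℝ) p :=
    hasFDerivAt_snd.const_add 1
  have h2 : HasFDerivAt (fun p : Pt n => p.1) (ContinuousLinearMap.fst ℝ (EuclideanSpace ℝ (Fin (n - 1))) ℝ) p :=
    hasFDerivAt_fst
  have h3 := h1.pow 2
  have h4 := h2.norm_sq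
  refine (h3.add h4).congr_fderiv ?_
  ext v
  · simp
  · simp; ring

theorem DDpow (n : ℕ) (a : ℝ) {p : Pt n} (hp : 0 ≤ p.2) : HasFDerivAt (fun y => DD n y ^ a)
    ((a * DD n p ^ (a - 1)) • ((2 * (1 + p.2)) • ContinuousLinearMap.snd ℝ (EuclideanSpace ℝ (Fin (n - 1))) ℝ +
      (2 : ℝ) • (innerSL ℝ p.1).comp (ContinuousLinearMap.fst ℝ (EuclideanSpace ℝ (Fin (n - 1))) ℝ))) p :=
  (DD_hasFDeriv n p).rpow_const (Or.inl (DD_pos hp).ne')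

theorem pdU (n : ℕ) {p : Pt n} (hp : 0 ≤ p.2) (v : Pt n) : pd v (stdBubble n) p =
    -((n : ℝ) - 2) * DD n p ^ (-(n : ℝ) / 2) * ((1 + p.2) * v.2 + inner ℝ p.1 v.1) := by
  have h := (DDpow n (-(((n : ℝ) - 2) / 2)) hp)
  have h2 : (fun y => DD n y ^ (-(((n : ℝ) - 2) / 2))) = stdBubble n := rfl
  rw [h2] at h
  rw [pd, h.fderiv]
  have e : -(((n : ℝ) - 2) / 2) - 1 = -(n : ℝ) / 2 := by ring
  rw [e]
  simp
  ring

theorem jl (n : ℕ) {p : Pt n} (hp : 0 ≤ p.2) : jlast n p =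
    (((n : ℝ) - 2) / 2) * DD n p ^ (-(n : ℝ) / 2) * (1 - p.2 ^ 2 - ‖p.1‖ ^ 2) := by
  have hU : stdBubble n p = DD n p ^ (-(n : ℝ) / 2) * DD n p := by
    have : stdBubble n p = DD n p ^ (-(((n : ℝ) - 2) / 2)) := rfl
    rw [this, ← Real.rpow_add_one (DD_pos hp).ne']
    congr 1; ring
  have hs : (∑ i : Fin (n - 1), p.1 i * pd (ez n i) (stdBubble n) p) +
      p.2 * pd (et n) (stdBubble n) p = pd p (stdBubble n) p := by
    have := clm_eq_sum n (fderiv ℝ (stdBubble n) p) p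
    rw [Fintype.sum_option] at this
    refine Eq.trans ?_ this.symm
    rw [add_comm]; rfl
  rw [jlast, hs, pdU n hp, hU, real_inner_self_eq_norm_sq]
  have : DD n p = (1 + p.2) ^ 2 + ‖p.1‖ ^ 2 := rfl
  generalize DD n p ^ (-(n : ℝ) / 2) = W
  rw [this]; ring

def vv (n : ℕ) (φ : Pt n → ℝ) (p : Pt n) : ℝ := φ p * DD n p ^ (((n : ℝ) - 2) / 2)

theorem phi_diff {n : ℕ} {φ : Pt n → ℝ} (hφ : ContDiffOn ℝ 2 φ (HH n)) {p : Pt n} (hp : p ∈ upperHalf n) :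
    DifferentiableAt ℝ φ p :=
  (hφ.contDiffAt (HH_nhds hp)).differentiableAt (by norm_num)

theorem vv_diff {n : ℕ} {φ : Pt n → ℝ} (hφ : ContDiffOn ℝ 2 φ (HH n)) {p : Pt n} (hp : p ∈ upperHalf n) :
    DifferentiableAt ℝ (vv n φ) p :=
  (phi_diff hφ hp).mul (DDpow n _ (le_of_lt hp)).differentiableAt

theorem vv_X {n : ℕ} {φ : Pt n → ℝ} (hφ : ContDiffOn ℝ 2 φ (HH n)) {p : Pt n} (hp : p ∈ upperHalf n)
    (hw : ww n φ p = 0) : fderiv ℝ (vv n φ) p (XX n p) = 2 * vv n φ p := by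
  have hp' : 0 ≤ p.2 := le_of_lt hp
  have h1 := (phi_diff hφ hp).hasFDerivAt.mul (DDpow n (((n : ℝ) - 2) / 2) hp')
  have h2 : fderiv ℝ (vv n φ) p = _ := h1.fderiv
  have h3 : fderiv ℝ φ p (XX n p) = (n - (n - 2) * p.2) * φ p := by
    have := pd_within φ hp (XX n p)
    rw [pd] at this
    rw [this]
    rw [ww] at hw
    linarith
  rw [h2]
  simp only [add_apply, smul_apply, smul_eq_mul, h3]
  simp only [XX, ContinuousLinearMap.coe_snd', ContinuousLinearMap.comp_apply, ContinuousLinearMap.coe_fst',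
    innerSL_apply_apply, inner_smul_right, real_inner_self_eq_norm_sq]
  have hpw : DD n p ^ (((n : ℝ) - 2) / 2) = DD n p ^ (((n : ℝ) - 2) / 2 - 1) * DD n p := by
    rw [← Real.rpow_add_one (DD_pos hp').ne']; congr 1; ring
  rw [vv, hpw]
  have : DD n p = (1 + p.2) ^ 2 + ‖p.1‖ ^ 2 := rfl
  generalize DD n p ^ (((n : ℝ) - 2) / 2 - 1) = W
  rw [this]; ring

section curve
variable (n : ℕ) (ζ : EuclideanSpace ℝ (Fin (n - 1))) (τ : ℝ)

def Dl (r : ℝ) : ℝ := (1 + r * τ) ^ 2 + r ^ 2 * ‖ζ‖ ^ 2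
def gm (r : ℝ) : Pt n := ((2 * r / Dl n ζ τ r) • ζ, (1 - r ^ 2 * (‖ζ‖ ^ 2 + τ ^ 2)) / Dl n ζ τ r)
def gmd (r : ℝ) : Pt n := ((2 * (1 - r ^ 2 * (‖ζ‖ ^ 2 + τ ^ 2)) / Dl n ζ τ r ^ 2) • ζ,
  (-(2 * r * (‖ζ‖ ^ 2 + τ ^ 2)) * Dl n ζ τ r - (1 - r ^ 2 * (‖ζ‖ ^ 2 + τ ^ 2)) *
    (2 * τ + 2 * r * (‖ζ‖ ^ 2 + τ ^ 2))) / Dl n ζ τ r ^ 2)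

theorem Dl_deriv (r : ℝ) : HasDerivAt (Dl n ζ τ) (2 * τ + 2 * r * (‖ζ‖ ^ 2 + τ ^ 2)) r := by
  unfold Dl
  have h1 : HasDerivAt (fun r : ℝ => 1 + r * τ) (1 * τ) r := ((hasDerivAt_id r).mul_const τ).const_add 1
  have h2 := (h1.fun_pow 2).fun_add ((hasDerivAt_pow 2 r).mul_const (‖ζ‖ ^ 2))
  refine h2.congr_deriv ?_
  norm_num; ring

theorem gm_deriv (r : ℝ) (hD : Dl n ζ τ r ≠ 0) : HasDerivAt (gm n ζ τ) (gmd n ζ τ r) r := by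
  have hd := Dl_deriv n ζ τ r
  have h1 : HasDerivAt (fun r : ℝ => 2 * r) (2 * 1) r := (hasDerivAt_id r).const_mul 2
  have h2 := ((h1.fun_div hd hD).smul_const ζ)
  have h3 : HasDerivAt (fun r : ℝ => 1 - r ^ 2 * (‖ζ‖ ^ 2 + τ ^ 2)) (-(2 * r * (‖ζ‖ ^ 2 + τ ^ 2))) r := by
    have := ((hasDerivAt_pow 2 r).mul_const (‖ζ‖ ^ 2 + τ ^ 2)).const_sub 1
    refine this.congr_deriv ?_
    norm_num
  have h4 := h3.fun_div hd hD
  refine (h2.prodMk h4).congr_deriv ?_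
  unfold gmd
  congr 3
  unfold Dl; ring

theorem gm_X (r : ℝ) (hD : Dl n ζ τ r ≠ 0) : (2 * r) • gmd n ζ τ r = XX n (gm n ζ τ r) := by
  have h2 : ‖(2 * r / Dl n ζ τ r) • ζ‖ ^ 2 = (2 * r / Dl n ζ τ r) ^ 2 * ‖ζ‖ ^ 2 := by
    rw [norm_smul, mul_pow, Real.norm_eq_abs, sq_abs]
  unfold gmd XX gm
  simp only [h2, Prod.smul_mk, smul_smul, smul_eq_mul]
  refine Prod.ext ?_ ?_
  · simp only
    congr 1
    field_simp
  · simp only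
    field_simp
    unfold Dl; ring

theorem gm_sub (hs : ‖ζ‖ ^ 2 + τ ^ 2 < 1) {r : ℝ} (h0 : 0 ≤ r) (h1 : r ≤ 1) :
    0 < Dl n ζ τ r ∧ gm n ζ τ r ∈ upperHalf n := by
  have hr : r ^ 2 ≤ 1 := by nlinarith
  have hlt : r ^ 2 * (‖ζ‖ ^ 2 + τ ^ 2) < 1 := by nlinarith [sq_nonneg τ, sq_nonneg ‖ζ‖]
  have hD : 0 < Dl n ζ τ r := by
    unfold Dl
    by_contra h
    have e1 : (1 + r * τ) ^ 2 = 0 := by nlinarith [sq_nonneg (1 + r * τ), mul_nonneg (sq_nonneg r) (sq_nonneg ‖ζ‖)]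
    have e2 : 1 + r * τ = 0 := by simpa using e1
    have e3 : r * τ = -1 := by linarith
    have e4 : (r * τ) ^ 2 = 1 := by rw [e3]; norm_num
    nlinarith [mul_nonneg (sq_nonneg r) (sq_nonneg ‖ζ‖)]
  refine ⟨hD, ?_⟩
  change 0 < (1 - r ^ 2 * (‖ζ‖ ^ 2 + τ ^ 2)) / Dl n ζ τ r
  exact div_pos (by linarith) hD

end curve

theorem et_mem (n : ℕ) : et n ∈ upperHalf n := by
  change (0:ℝ) < 1; norm_num

theorem gm_zero (n : ℕ) (ζ : EuclideanSpace ℝ (Fin (n - 1))) (τ : ℝ) : gm n ζ τ 0 = et n := by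
  simp [gm, Dl, et]

theorem vv_curve {n : ℕ} {φ : Pt n → ℝ} (hφ : ContDiffOn ℝ 2 φ (HH n))
    (hw : ∀ p ∈ upperHalf n, ww n φ p = 0) (ζ : EuclideanSpace ℝ (Fin (n - 1))) (τ : ℝ)
    (hs : ‖ζ‖ ^ 2 + τ ^ 2 < 1) :
    vv n φ (gm n ζ τ 1) = fderiv ℝ (vv n φ) (et n) ((2:ℝ) • ζ, -2 * τ) := by
  have hg : ∀ r : ℝ, 0 ≤ r → r ≤ 1 → HasDerivAt (fun r => vv n φ (gm n ζ τ r))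
      (fderiv ℝ (vv n φ) (gm n ζ τ r) (gmd n ζ τ r)) r := by
    intro r h0 h1
    obtain ⟨a, b⟩ := gm_sub n ζ τ hs h0 h1
    exact (vv_diff hφ b).hasFDerivAt.comp_hasDerivAt r (gm_deriv n ζ τ r a.ne')
  have hgr : ∀ r : ℝ, 0 ≤ r → r ≤ 1 → r * fderiv ℝ (vv n φ) (gm n ζ τ r) (gmd n ζ τ r) = vv n φ (gm n ζ τ r) := by
    intro r h0 h1
    obtain ⟨a, b⟩ := gm_sub n ζ τ hs h0 h1
    have := vv_X hφ b (hw _ b)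
    rw [← gm_X n ζ τ r a.ne', map_smul, smul_eq_mul] at this
    linarith
  have hv0 : vv n φ (gm n ζ τ 0) = 0 := by
    rw [← hgr 0 le_rfl zero_le_one]; simp
  have hconst : ∀ r : ℝ, 0 < r → r ≤ 1 → vv n φ (gm n ζ τ r) / r = vv n φ (gm n ζ τ 1) := by
    intro r h0 h1
    have hd : ∀ x ∈ Set.Icc r 1, HasDerivAt (fun r => vv n φ (gm n ζ τ r) / r) 0 x := by
      intro x hx
      have hx0 : 0 < x := lt_of_lt_of_le h0 hx.1
      have := (hg x hx0.le hx.2).fun_div (hasDerivAt_id x) hx0.ne'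
      refine this.congr_deriv ?_
      have h2 := hgr x hx0.le hx.2
      simp only [id]
      rw [← h2]
      field_simp
      ring
    have := constant_of_has_deriv_right_zero (f := fun r => vv n φ (gm n ζ τ r) / r) (a := r) (b := 1)
      (fun x hx => (hd x hx).continuousAt.continuousWithinAt)
      (fun x hx => (hd x ⟨hx.1, hx.2.le⟩).hasDerivWithinAt) 1 ⟨h1, le_rfl⟩
    simp only [div_one] at this
    exact this.symm
  have h0 := hg 0 le_rfl zero_le_one
  rw [hasDerivAt_iff_tendsto_slope_zero] at h0
  have h1 := h0.mono_left (nhdsWithin_mono 0 (fun x (hx : x ∈ Set.Ioi (0:ℝ)) => ne_of_gt hx))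
  have h2 : Filter.Tendsto (fun t : ℝ => t⁻¹ • (vv n φ (gm n ζ τ (0 + t)) - vv n φ (gm n ζ τ 0)))
      (nhdsWithin 0 (Set.Ioi 0)) (nhds (vv n φ (gm n ζ τ 1))) := by
    refine tendsto_const_nhds.congr' ?_
    filter_upwards [Ioc_mem_nhdsGT (show (0:ℝ) < 1 by norm_num)] with r hr
    rw [hv0, zero_add, sub_zero, ← hconst r hr.1 hr.2, smul_eq_mul, div_eq_inv_mul]
  have h3 := tendsto_nhds_unique h2 h1
  rw [h3, gm_zero]
  congr 1
  simp [gmd, Dl]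

theorem phi_formula {n : ℕ} {φ : Pt n → ℝ} (hφ : ContDiffOn ℝ 2 φ (HH n))
    (hw : ∀ p ∈ upperHalf n, ww n φ p = 0) {q : Pt n} (hq : q ∈ upperHalf n) :
    φ q = DD n q ^ (-(n : ℝ) / 2) *
      fderiv ℝ (vv n φ) (et n) ((4:ℝ) • q.1, -2 * (1 - q.2 ^ 2 - ‖q.1‖ ^ 2)) := by
  have hq' : 0 < q.2 := hq
  have hD := DD_pos hq'.le
  have hDe : DD n q = (1 + q.2) ^ 2 + ‖q.1‖ ^ 2 := rfl
  set ζ : EuclideanSpace ℝ (Fin (n - 1)) := (2 / DD n q) • q.1 with hζ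
  set τ : ℝ := (1 - q.2 ^ 2 - ‖q.1‖ ^ 2) / DD n q with hτ
  have hz : ‖ζ‖ ^ 2 = (2 / DD n q) ^ 2 * ‖q.1‖ ^ 2 := by
    rw [hζ, norm_smul, mul_pow, Real.norm_eq_abs, sq_abs]
  have hst : ‖ζ‖ ^ 2 + τ ^ 2 = 1 - 4 * q.2 / DD n q := by
    rw [hz, hτ]; field_simp; rw [hDe]; ring
  have hs : ‖ζ‖ ^ 2 + τ ^ 2 < 1 := by
    rw [hst]; have : 0 < 4 * q.2 / DD n q := by positivity
    linarith
  have hDl : Dl n ζ τ 1 = 4 / DD n q := by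
    have : Dl n ζ τ 1 = 1 + 2 * τ + (‖ζ‖ ^ 2 + τ ^ 2) := by unfold Dl; ring
    rw [this, hst, hτ]; field_simp; rw [hDe]; ring
  have hg : gm n ζ τ 1 = q := by
    refine Prod.ext ?_ ?_
    · simp only [gm, hDl]
      rw [hζ, smul_smul]
      have : 2 * 1 / (4 / DD n q) * (2 / DD n q) = 1 := by field_simp; norm_num
      rw [this, one_smul]
    · simp only [gm, hDl]
      rw [hst]; field_simp; ring
  have h := vv_curve hφ hw ζ τ hs
  rw [hg] at h
  have e : ((2:ℝ) • ζ, -2 * τ) = (DD n q)⁻¹ • (((4:ℝ) • q.1, -2 * (1 - q.2 ^ 2 - ‖q.1‖ ^ 2)) : Pt n) := by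
    rw [Prod.smul_mk, hζ, hτ, smul_smul, smul_smul, smul_eq_mul]
    refine Prod.ext ?_ ?_
    · simp only; congr 1; field_simp; norm_num
    · simp only; field_simp
  rw [e, map_smul, smul_eq_mul, vv] at h
  set A := fderiv ℝ (vv n φ) (et n) ((4:ℝ) • q.1, -2 * (1 - q.2 ^ 2 - ‖q.1‖ ^ 2))
  have e1 : DD n q ^ (((n : ℝ) - 2) / 2) * DD n q * DD n q ^ (-(n : ℝ) / 2) = 1 := by
    rw [← Real.rpow_add_one hD.ne', ← Real.rpow_add hD]
    have e0 : ((n : ℝ) - 2) / 2 + 1 + -(n : ℝ) / 2 = 0 := by ring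
    rw [e0, Real.rpow_zero]
  have h5 : φ q * DD n q ^ (((n : ℝ) - 2) / 2) * DD n q = A := by rw [h]; field_simp
  rw [← h5]
  linear_combination (- φ q) * e1

theorem bdry_conv {n : ℕ} (hn : 3 ≤ n) {φ : Pt n → ℝ} (hφ : ContDiffOn ℝ 2 φ (HH n))
    (hbdry : ∀ z : EuclideanSpace ℝ (Fin (n - 1)),
      derivWithin (fun t : ℝ => φ (z, t)) (Set.Ici (0 : ℝ)) 0 +
        (n : ℝ) * (stdBubble n (z, 0)) ^ (2 / ((n : ℝ) - 2)) * φ (z, 0) = 0)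
    (z : EuclideanSpace ℝ (Fin (n - 1))) :
    (1 + ‖z‖ ^ 2) * fderivWithin ℝ φ (HH n) (z, 0) (et n) + n * φ (z, 0) = 0 := by
  have hn' : (3:ℝ) ≤ n := by exact_mod_cast hn
  have h1 : stdBubble n (z, 0) ^ (2 / ((n : ℝ) - 2)) = (1 + ‖z‖ ^ 2)⁻¹ := by
    have hp : (0:ℝ) < 1 + ‖z‖ ^ 2 := by positivity
    have : stdBubble n (z, 0) = (1 + ‖z‖ ^ 2) ^ (-(((n : ℝ) - 2) / 2)) := by simp [stdBubble]
    rw [this, ← Real.rpow_mul hp.le]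
    have h2 : -(((n : ℝ) - 2) / 2) * (2 / ((n : ℝ) - 2)) = -1 := by
      have : (n : ℝ) - 2 ≠ 0 := by linarith
      field_simp
    rw [h2, Real.rpow_neg_one]
  have h2 : derivWithin (fun t : ℝ => φ (z, t)) (Set.Ici (0 : ℝ)) 0 = fderivWithin ℝ φ (HH n) (z, 0) (et n) := by
    have hmem : ((z, 0) : Pt n) ∈ HH n := le_refl (0:ℝ)
    have hd : HasFDerivWithinAt φ (fderivWithin ℝ φ (HH n) (z, 0)) (HH n) (z, 0) :=
      ((hφ.differentiableOn (by norm_num)) _ hmem).hasFDerivWithinAt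
    have hc : HasDerivWithinAt (fun t : ℝ => ((z, t) : Pt n)) (et n) (Set.Ici 0) 0 :=
      ((hasDerivAt_const (0:ℝ) z).prodMk (hasDerivAt_id (0:ℝ))).hasDerivWithinAt
    have := HasFDerivWithinAt.comp_hasDerivWithinAt (0:ℝ) (f := fun t : ℝ => ((z, t) : Pt n)) hd hc (fun t ht => ht)
    exact this.derivWithin (uniqueDiffWithinAt_Ici 0)
  have := hbdry z
  rw [h1, h2] at this
  have hp : (1 + ‖z‖ ^ 2) ≠ 0 := by positivity
  field_simp at this
  linarith

/-- any finite-energy `C²` solution of the linearized problem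
`Δφ = 0` in `ℝ^n_+`, `∂φ/∂t + n U^{2/(n-2)} φ = 0` on `∂ℝ^n_+` is a linear
combination of `j_1, …, j_{n-1}, j_n`. -/
theorem stmt3 (n : ℕ) (hn : 3 ≤ n) (φ : Pt n → ℝ)
    (hreg : ContDiffOn ℝ 2 φ {p : Pt n | 0 ≤ p.2})
    (henergy : IntegrableOn
      (fun p : Pt n => (φ p) ^ 2 +
        ((∑ i : Fin (n - 1), (pd (ez n i) φ p) ^ 2) + (pd (et n) φ p) ^ 2))
      (upperHalf n) volume)
    (hharm : ∀ p : Pt n, 0 < p.2 → lap n φ p = 0)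
    (hbdry : ∀ z : EuclideanSpace ℝ (Fin (n - 1)),
      derivWithin (fun t : ℝ => φ (z, t)) (Set.Ici (0 : ℝ)) 0 +
        (n : ℝ) * (stdBubble n (z, 0)) ^ (2 / ((n : ℝ) - 2)) * φ (z, 0) = 0) :
    ∃ (c : Fin (n - 1) → ℝ) (cn : ℝ), ∀ p : Pt n, 0 < p.2 →
      φ p = (∑ i : Fin (n - 1), c i * pd (ez n i) (stdBubble n) p) + cn * jlast n p := by
  have hbb := bdry_conv hn hreg hbdry
  have hw : ∀ p ∈ upperHalf n, ww n φ p = 0 := fun p hp => ww_zero hn hreg hharm hbb henergy p hp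
  have hn' : (3:ℝ) ≤ n := by exact_mod_cast hn
  have hn2 : (n : ℝ) - 2 ≠ 0 := by linarith
  refine ⟨fun i => -4 * fderiv ℝ (vv n φ) (et n) (ez n i) / ((n : ℝ) - 2),
    -4 * fderiv ℝ (vv n φ) (et n) (et n) / ((n : ℝ) - 2), fun p hp => ?_⟩
  have hp' : 0 ≤ p.2 := le_of_lt hp
  rw [phi_formula hreg hw hp, clm_eq_sum, Fintype.sum_option, jl n hp', add_comm, mul_add, Finset.mul_sum]
  congr 1
  · refine Finset.sum_congr rfl fun i _ => ?_
    rw [pdU n hp', co_some]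
    have : inner ℝ p.1 (ez n i).1 = p.1 i := by simp [ez, EuclideanSpace.inner_single_right]
    rw [this]
    simp only [ez, ee, mul_zero, zero_add, PiLp.smul_apply, smul_eq_mul]
    field_simp
  · rw [co_none]
    simp only [ee]
    field_simp
    ring
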